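/- arXiv:math/0511220 — 3 statements merged into one kernel-verified Lean document; each statement's English description precedes it below -/
import Mathlib

section
/- The number of symmetric matrices in U(n, F_{q²}) (i.e. elements g of the finite unitary group with g^T = g) equals (q+1)·q²·(q³+1)·q⁴ ⋯ (q^n + (1−(−1)^n)/2). -/
open Matrix

set_option linter.unusedSectionVars false

section PartA
variable {K : Type*} [Field K] [StarRing K]

/-- invertible Hermitian matrices -/
abbrev HI (K : Type*) [Field K] [StarRing K] (ι : Type*) [Fintype ι] [DecidableEq ι] : Type _ :=
  {M : Matrix ι ι K // M.IsHermitian ∧ M.det ≠ 0}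

/-- bordered matrix -/
def bord {ι : Type*} (a : K) (v : ι → K) (D : Matrix ι ι K) : Matrix (Unit ⊕ ι) (Unit ⊕ ι) K :=
  fromBlocks (of fun _ _ => a) (of fun _ j => star (v j)) (of fun i _ => v i) D

lemma bord_herm {ι : Type*} (a : K) (v : ι → K) (D : Matrix ι ι K) :
    (bord a v D).IsHermitian ↔ star a = a ∧ D.IsHermitian := by
  unfold bord
  rw [isHermitian_fromBlocks_iff]
  constructor
  · rintro ⟨h1, -, -, h2⟩
    exact ⟨by simpa using congrFun (congrFun h1 ()) (), h2⟩
  · rintro ⟨h1, h2⟩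
    refine ⟨?_, ?_, ?_, h2⟩
    · ext i j; simpa using h1
    · ext i j; simp
    · ext i j; simp

lemma bord_surj {ι : Type*} (M : Matrix (Unit ⊕ ι) (Unit ⊕ ι) K) (hM : M.IsHermitian) :
    M = bord (M (.inl ()) (.inl ())) (fun i => M (.inr i) (.inl ())) (M.toBlocks₂₂) := by
  ext i j
  rcases i with i | i <;> rcases j with j | j <;> simp [bord, toBlocks₂₂]
  exact (hM.apply _ _).symm

/-- decomposition -/
def bordEquiv {ι : Type*} (P : Matrix (Unit ⊕ ι) (Unit ⊕ ι) K → Prop) :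
    {M : Matrix (Unit ⊕ ι) (Unit ⊕ ι) K // M.IsHermitian ∧ P M} ≃
      Σ a : {x : K // star x = x}, Σ v : ι → K,
        {D : Matrix ι ι K // D.IsHermitian ∧ P (bord a.1 v D)} where
  toFun M := ⟨⟨M.1 (.inl ()) (.inl ()), M.2.1.apply _ _⟩, fun i => M.1 (.inr i) (.inl ()),
    ⟨M.1.toBlocks₂₂, by
      have h := bord_surj M.1 M.2.1
      have h1 := M.2.1
      rw [h] at h1
      exact ((bord_herm _ _ _).1 h1).2, by
      have h := bord_surj M.1 M.2.1
      have h1 := M.2.2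
      rw [h] at h1
      exact h1⟩⟩
  invFun t := ⟨bord t.1.1 t.2.1 t.2.2.1, (bord_herm _ _ _).2 ⟨t.1.2, t.2.2.2.1⟩, t.2.2.2.2⟩
  left_inv M := Subtype.ext (bord_surj M.1 M.2.1).symm
  right_inv t := by
    obtain ⟨⟨a, ha⟩, v, ⟨D, hD⟩⟩ := t
    rfl

lemma exists_col {K : Type*} [Field K] {ι : Type*} [Fintype ι] [DecidableEq ι] (v : ι → K) (hv : v ≠ 0) (i : ι) : ∃ P : Matrix ι ι K, P.det ≠ 0 ∧ P.col i = v := by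
  obtain ⟨j, hj⟩ := Function.ne_iff.1 hv
  refine ⟨((1 : Matrix ι ι K).updateCol j v).submatrix id (Equiv.swap i j), ?_, ?_⟩
  · rw [det_permute']
    have : ((1 : Matrix ι ι K).updateCol j v).det = v j := by
      rw [← cramer_apply, cramer_one]; rfl
    rw [this]
    refine mul_ne_zero ?_ hj
    rcases Int.units_eq_one_or (Equiv.Perm.sign (Equiv.swap i j)) with h | h <;> simp [h]
  · ext k
    simp

lemma det_bord_ne {K : Type*} [Field K] [StarRing K] {ι : Type*} [Fintype ι] [DecidableEq ι] (a : K) (ha : a ≠ 0) (v : ι → K) (D : Matrix ι ι K) :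
    (bord a v D).det ≠ 0 ↔ (D - of fun i j => v i * a⁻¹ * star (v j)).det ≠ 0 := by
  let A : Matrix Unit Unit K := of fun _ _ => a
  let B : Matrix Unit ι K := of fun _ j => star (v j)
  let C : Matrix ι Unit K := of fun i _ => v i
  let A' : Matrix Unit Unit K := of fun _ _ => a⁻¹
  let : Invertible A := ⟨A', by ext; simp [A, A', mul_apply, ha],
    by ext; simp [A, A', mul_apply, ha]⟩
  have h1 : (bord a v D).det = A.det * (D - C * A' * B).det := det_fromBlocks₁₁ A B C D
  have hA : A.det = a := by simp [A]
  have e : C * A' * B = of fun i j => v i * a⁻¹ * star (v j) := by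
    ext i j
    simp [A', B, C, mul_apply]
  rw [h1, hA, e]
  simp [ha]

variable [Fintype K] {ι : Type*} [Fintype ι] [DecidableEq ι]

lemma fib_ne (a : K) (hs : star a = a) (ha : a ≠ 0) (v : ι → K) :
    Nat.card {D : Matrix ι ι K // D.IsHermitian ∧ (bord a v D).det ≠ 0} = Nat.card (HI K ι) := by
  have hh : (of fun i j => v i * a⁻¹ * star (v j) : Matrix ι ι K).IsHermitian := by
    ext i j
    simp [hs]; ring
  apply Nat.card_congr
  exact
  { toFun := fun D => ⟨D.1 - of fun i j => v i * a⁻¹ * star (v j), D.2.1.sub hh,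
      (det_bord_ne a ha v D.1).1 D.2.2⟩
    invFun := fun D => ⟨D.1 + of fun i j => v i * a⁻¹ * star (v j), D.2.1.add hh,
      (det_bord_ne a ha v _).2 (by simpa using D.2.2)⟩
    left_inv := fun D => Subtype.ext (by simp)
    right_inv := fun D => Subtype.ext (by simp) }

lemma fib_zero : Nat.card {D : Matrix ι ι K // D.IsHermitian ∧ (bord 0 0 D).det ≠ 0} = 0 := by
  have : IsEmpty {D : Matrix ι ι K // D.IsHermitian ∧ (bord 0 0 D).det ≠ 0} := by
    refine ⟨fun D => D.2.2 ?_⟩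
    apply det_eq_zero_of_row_eq_zero (Sum.inl ())
    rintro (j | j) <;> simp [bord]
  simp

lemma bord_congr (P : Matrix ι ι K) (a : K) (v : ι → K) (D : Matrix ι ι K) :
    bord a (P *ᵥ v) (P * D * Pᴴ) = fromBlocks 1 0 0 P * bord a v D * (fromBlocks 1 0 0 P)ᴴ := by
  rw [fromBlocks_conjTranspose]
  unfold bord
  rw [fromBlocks_multiply, fromBlocks_multiply]
  congr 1
  · ext; simp
  · ext i j
    simp [mul_apply, mulVec, dotProduct, mul_comm]
  · ext i j
    simp [mul_apply, mulVec, dotProduct]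
  · simp

lemma fib_conj (P : Matrix ι ι K) (hP : P.det ≠ 0) (v : ι → K) :
    Nat.card {D : Matrix ι ι K // D.IsHermitian ∧ (bord 0 v D).det ≠ 0}
    ≤ Nat.card {D : Matrix ι ι K // D.IsHermitian ∧ (bord 0 (P *ᵥ v) D).det ≠ 0} := by
  have hu : IsUnit P := (isUnit_iff_isUnit_det P).2 hP.isUnit
  have hu' : IsUnit Pᴴ := hu.star
  refine Nat.card_le_card_of_injective
    (fun D => ⟨P * D.1 * Pᴴ, isHermitian_mul_mul_conjTranspose P D.2.1, ?_⟩) ?_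
  · rw [bord_congr, det_mul, det_mul, det_conjTranspose, det_fromBlocks_zero₂₁]
    simp [hP, D.2.2]
  · intro D E h
    have h := congrArg Subtype.val h
    exact Subtype.ext (hu.mul_left_cancel (hu'.mul_right_cancel h))

lemma fib_const (i : ι) (v : ι → K) (hv : v ≠ 0) :
    Nat.card {D : Matrix ι ι K // D.IsHermitian ∧ (bord 0 v D).det ≠ 0}
    = Nat.card {D : Matrix ι ι K // D.IsHermitian ∧ (bord 0 (Pi.single i 1) D).det ≠ 0} := by
  obtain ⟨P, hP, h⟩ := exists_col v hv i
  have h1 : P *ᵥ Pi.single i 1 = v := by rw [mulVec_single_one]; exact h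
  apply le_antisymm
  · have h2 : P⁻¹ *ᵥ v = Pi.single i 1 := by
      rw [← h1, mulVec_mulVec, nonsing_inv_mul _ hP.isUnit, one_mulVec]
    have := fib_conj P⁻¹ (by rw [det_nonsing_inv]; simpa using hP) v
    rwa [h2] at this
  · have := fib_conj P hP (Pi.single i 1)
    rwa [h1] at this

lemma det_bord_bord (b : K) (c : ι → K) (D : Matrix ι ι K) :
    (bord 0 (Pi.single (Sum.inl ()) 1) (bord b c D)).det ≠ 0 ↔ D.det ≠ 0 := by
  have key : (bord 0 (Pi.single (Sum.inl ()) 1) (bord b c D)).submatrix id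
      (Equiv.swap (Sum.inl ()) (Sum.inr (Sum.inl ()))) =
      fromBlocks 1 0 (of fun i _ => Sum.elim (fun _ => b) c i)
        (fromBlocks 1 (of fun _ j => star (c j)) 0 D) := by
    ext i j
    rcases i with i | i | i <;> rcases j with j | j | j <;>
      simp [bord, Equiv.swap_apply_def]
  have := congrArg det key
  rw [det_permute', det_fromBlocks_zero₁₂, det_fromBlocks_zero₂₁] at this
  rw [Equiv.Perm.sign_swap (by simp)] at this
  simp only [det_one, one_mul] at this
  rw [← this]
  simp

lemma fib_single :
    Nat.card {D : Matrix (Unit ⊕ ι) (Unit ⊕ ι) K //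
      D.IsHermitian ∧ (bord 0 (Pi.single (Sum.inl ()) 1) D).det ≠ 0}
    = Nat.card {x : K // star x = x} * (Nat.card K ^ Fintype.card ι * Nat.card (HI K ι)) := by
  classical
  rw [Nat.card_congr (bordEquiv _), Nat.card_sigma]
  have : ∀ a : {x : K // star x = x}, Nat.card (Σ v : ι → K,
      {D : Matrix ι ι K // D.IsHermitian ∧ (bord 0 (Pi.single (Sum.inl ()) 1) (bord a.1 v D)).det ≠ 0})
      = Nat.card K ^ Fintype.card ι * Nat.card (HI K ι) := by
    intro a
    rw [Nat.card_sigma]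
    simp_rw [det_bord_bord]
    simp
  simp_rw [this]
  simp

lemma hcard_rec :
    Nat.card (HI K (Unit ⊕ (Unit ⊕ ι))) =
      (Nat.card {x : K // star x = x} - 1) *
        (Nat.card K ^ (Fintype.card ι + 1) * Nat.card (HI K (Unit ⊕ ι)))
      + (Nat.card K ^ (Fintype.card ι + 1) - 1) *
        (Nat.card {x : K // star x = x} * (Nat.card K ^ Fintype.card ι * Nat.card (HI K ι))) := by
  classical
  rw [Nat.card_congr (bordEquiv _), Nat.card_sigma]
  simp_rw [Nat.card_sigma]
  rw [← Finset.sum_erase_add _ _ (Finset.mem_univ (⟨0, star_zero K⟩ : {x : K // star x = x}))]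
  congr 1
  · rw [Finset.sum_congr rfl (g := fun _ => Nat.card K ^ (Fintype.card ι + 1) * Nat.card (HI K (Unit ⊕ ι)))]
    · simp [Finset.card_erase_of_mem]
    · intro a ha
      rw [Finset.sum_congr rfl (fun v _ => fib_ne a.1 a.2 ?_ v)]
      · simp [add_comm]
      · intro h
        exact (Finset.ne_of_mem_erase ha) (Subtype.ext h)
  · rw [← Finset.sum_erase_add _ _ (Finset.mem_univ (0 : Unit ⊕ ι → K))]
    rw [fib_zero, add_zero]
    rw [Finset.sum_congr rfl (fun v hv => fib_const (Sum.inl ()) v (Finset.ne_of_mem_erase hv))]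
    simp_rw [fib_single]
    simp [Finset.card_erase_of_mem, add_comm]

lemma hcard_congr {κ : Type*} [Fintype κ] [DecidableEq κ] (e : ι ≃ κ) :
    Nat.card (HI K ι) = Nat.card (HI K κ) := by
  apply Nat.card_congr
  refine (Matrix.reindex e e).subtypeEquiv ?_
  intro M
  rw [reindex_apply, det_submatrix_equiv_self, isHermitian_submatrix_equiv]

lemma hcard_zero : Nat.card (HI K (Fin 0)) = 1 := by
  have : Unique (HI K (Fin 0)) :=
    { default := ⟨1, isHermitian_one, by simp⟩
      uniq := fun a => Subtype.ext (Subsingleton.elim _ _) }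
  simp

lemma hcard_one : Nat.card (HI K (Fin 1)) = Nat.card {x : K // star x = x} - 1 := by
  classical
  have e : HI K (Fin 1) ≃ {x : {x : K // star x = x} // ¬ (x = ⟨0, star_zero K⟩)} :=
  { toFun := fun M => ⟨⟨M.1 0 0, M.2.1.apply _ _⟩, fun h => M.2.2 (by
      rw [det_fin_one]; exact congrArg Subtype.val h)⟩
    invFun := fun x => ⟨of fun _ _ => x.1.1, by ext; simp [x.1.2], by
      rw [det_fin_one]; exact fun h => x.2 (Subtype.ext h)⟩
    left_inv := fun M => Subtype.ext (by ext i j; simp [Subsingleton.elim i 0, Subsingleton.elim j 0])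
    right_inv := fun x => rfl }
  rw [Nat.card_congr e, Nat.card_eq_fintype_card, Fintype.card_subtype_compl]
  simp

lemma hcard_succ (n : ℕ) : Nat.card (HI K (Fin (n+2))) =
      (Nat.card {x : K // star x = x} - 1) *
        (Nat.card K ^ (n + 1) * Nat.card (HI K (Fin (n+1))))
      + (Nat.card K ^ (n + 1) - 1) *
        (Nat.card {x : K // star x = x} * (Nat.card K ^ n * Nat.card (HI K (Fin n)))) := by
  have e : ∀ n, Nonempty (Unit ⊕ Fin n ≃ Fin (n+1)) := fun n => ⟨Fintype.equivOfCardEq (by simp [add_comm])⟩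
  obtain ⟨e1⟩ := e n
  obtain ⟨e2⟩ := e (n+1)
  rw [hcard_congr (((Equiv.refl Unit).sumCongr e1).trans e2).symm, hcard_rec, hcard_congr e1]
  simp
end PartA

section PartB
variable {K : Type*} [Field K] [StarRing K]
variable {ι : Type*} [Fintype ι] [DecidableEq ι]

lemma exists_trace_ne (hε : ∃ e : K, star e ≠ e) : ∃ t : K, t + star t ≠ 0 := by
  by_contra! h
  obtain ⟨e, he⟩ := hε
  have h1 := h 1
  have h2 := h e
  rw [star_one] at h1
  apply he
  linear_combination h2 - e * h1

lemma exists_nonisotropic (hε : ∃ e : K, star e ≠ e) (M : Matrix ι ι K) (hM : M.IsHermitian)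
    (h0 : M ≠ 0) : ∃ v : ι → K, v ⬝ᵥ M *ᵥ star v ≠ 0 := by
  by_cases hd : ∃ i, M i i ≠ 0
  · obtain ⟨i, hi⟩ := hd
    refine ⟨Pi.single i 1, ?_⟩
    have : (star (Pi.single i 1 : ι → K)) = Pi.single i 1 := by
      rw [← Pi.single_star, star_one]
    rw [this]
    simpa using hi
  push Not at hd
  have : ∃ i j, M i j ≠ 0 := by
    by_contra! h
    exact h0 (by ext i j; exact h i j)
  obtain ⟨i, j, hij⟩ := this
  obtain ⟨t, ht⟩ := exists_trace_ne hε
  refine ⟨Pi.single i 1 + Pi.single j (star (t / M i j)), ?_⟩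
  have : star (Pi.single i 1 + Pi.single j (star (t / M i j)) : ι → K)
      = Pi.single i 1 + Pi.single j (t / M i j) := by
    rw [star_add, ← Pi.single_star, ← Pi.single_star, star_one, star_star]
  rw [this]
  have hji : M j i = star (M i j) := (hM.apply j i).symm
  have hs : star (M i j) ≠ 0 := by simpa using hij
  simp only [mulVec_add, add_dotProduct, dotProduct_add, mulVec_single, single_dotProduct,
    Pi.smul_apply, col_apply, hd, MulOpposite.op_one, one_smul, one_mul, hji]
  simp [hd, hs, hij]
  intro h
  apply ht
  rw [← h]
  field_simp
  ring

def Good (K : Type*) [Field K] [StarRing K] (ι : Type*) [Fintype ι] [DecidableEq ι] : Prop :=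
  ∀ M : Matrix ι ι K, M.IsHermitian → M.det ≠ 0 → ∃ h : Matrix ι ι K, h * hᴴ = M

lemma good_congr {κ : Type*} [Fintype κ] [DecidableEq κ] (e : ι ≃ κ) (h : Good K ι) : Good K κ := by
  intro M hM hd
  obtain ⟨k, hk⟩ := h (M.submatrix e e) (hM.submatrix e) (by simpa using hd)
  refine ⟨k.submatrix e.symm e.symm, ?_⟩
  rw [conjTranspose_submatrix, submatrix_mul_equiv, hk]
  simp

lemma good_succ (hε : ∃ e : K, star e ≠ e) (hn : ∀ c : K, star c = c → ∃ y, y * star y = c)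
    (h : Good K ι) : Good K (Unit ⊕ ι) := by
  intro M hM hd
  obtain ⟨v, hv⟩ := exists_nonisotropic hε M hM (by rintro rfl; simp at hd)
  obtain ⟨P', hP', hcol⟩ := exists_col v (by rintro rfl; simp at hv) (Sum.inl ())
  obtain ⟨P, rfl⟩ : ∃ P : Matrix (Unit ⊕ ι) (Unit ⊕ ι) K, P' = Pᵀ := ⟨P'ᵀ, by simp⟩
  rw [det_transpose] at hP'
  have hN : (P * M * Pᴴ).IsHermitian := isHermitian_mul_mul_conjTranspose P hM
  have hNd : (P * M * Pᴴ).det ≠ 0 := by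
    rw [det_mul, det_mul, det_conjTranspose]
    simp [hP', hd]
  have hNa : (P * M * Pᴴ) (Sum.inl ()) (Sum.inl ()) ≠ 0 := by
    convert hv using 1
    rw [Matrix.mul_assoc, ← hcol]
    simp only [mul_apply, dotProduct, mulVec]
    rfl
  have hb := bord_surj _ hN
  set N := P * M * Pᴴ with hNdef
  set a := N (Sum.inl ()) (Sum.inl ()) with hadef
  set w : ι → K := fun i => N (.inr i) (.inl ())
  set D := N.toBlocks₂₂
  rw [hb] at hN hNd
  have ha := ((bord_herm _ _ _).1 hN).1
  have hD := ((bord_herm _ _ _).1 hN).2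
  rw [det_bord_ne a hNa] at hNd
  have hh : (of fun i j => w i * a⁻¹ * star (w j) : Matrix ι ι K).IsHermitian := by
    ext i j
    simp [ha]; ring
  obtain ⟨k, hk⟩ := h _ (hD.sub hh) hNd
  obtain ⟨y, hy⟩ := hn a ha
  have hy0 : y ≠ 0 := by rintro rfl; simp at hy; exact hNa hy.symm
  have hsy0 : star y ≠ 0 := by simpa using hy0
  let h1 : Matrix (Unit ⊕ ι) (Unit ⊕ ι) K :=
    fromBlocks (of fun _ _ => y) 0 (of fun i _ => w i * (star y)⁻¹) k
  have hh1 : h1 * h1ᴴ = N := by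
    rw [hb]
    simp only [h1]
    rw [fromBlocks_conjTranspose, fromBlocks_multiply, hk]
    unfold bord
    congr 1
    · ext; simp [mul_apply, hy]
    · ext i j; simp [mul_apply]; field_simp
    · ext i j; simp [mul_apply]; field_simp
    · ext i j; simp [mul_apply, ← hy]; field_simp; ring
  refine ⟨P⁻¹ * h1, ?_⟩
  have hPu : IsUnit P.det := hP'.isUnit
  have hPu' : IsUnit (Pᴴ).det := by rw [det_conjTranspose]; exact hPu.star
  calc P⁻¹ * h1 * (P⁻¹ * h1)ᴴ = P⁻¹ * (h1 * h1ᴴ) * (P⁻¹)ᴴ := by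
        rw [conjTranspose_mul]; simp only [Matrix.mul_assoc]
    _ = (P⁻¹ * P) * M * (Pᴴ * (Pᴴ)⁻¹) := by
        rw [hh1, hNdef, conjTranspose_nonsing_inv]; simp only [Matrix.mul_assoc]
    _ = M := by rw [nonsing_inv_mul _ hPu, mul_nonsing_inv _ hPu']; simp

lemma good_fin (hε : ∃ e : K, star e ≠ e) (hn : ∀ c : K, star c = c → ∃ y, y * star y = c) (n : ℕ) :
    Good K (Fin n) := by
  induction n with
  | zero => exact fun M _ _ => ⟨1, Subsingleton.elim _ _⟩
  | succ n ih =>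
    exact good_congr (Fintype.equivOfCardEq (by simp [add_comm])) (good_succ hε hn ih)

/-- entrywise conjugation -/
def cj (A : Matrix ι ι K) : Matrix ι ι K := A.map (starRingEnd K)

lemma cj_mul (A B : Matrix ι ι K) : cj (A * B) = cj A * cj B := Matrix.map_mul
lemma cj_one : cj (1 : Matrix ι ι K) = 1 := by simp [cj]
lemma cj_cj (A : Matrix ι ι K) : cj (cj A) = A := by ext; simp [cj]
lemma cj_transpose (A : Matrix ι ι K) : (cj A)ᵀ = Aᴴ := rfl
lemma cj_conjTranspose (A : Matrix ι ι K) : cj (Aᴴ) = Aᵀ := by ext; simp [cj, starRingEnd_apply]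
lemma cj_det (A : Matrix ι ι K) : (cj A).det = star A.det := by
  rw [← det_transpose, cj_transpose, det_conjTranspose]
lemma cj_inv (A : Matrix ι ι K) (hA : A.det ≠ 0) : cj (A⁻¹) = (cj A)⁻¹ := by
  symm
  apply inv_eq_right_inv
  rw [← cj_mul, mul_nonsing_inv _ hA.isUnit, cj_one]

lemma hilbert90 (hε : ∃ e : K, star e ≠ e) (g : Matrix ι ι K) (hg : g * cj g = 1) :
    ∃ h : Matrix ι ι K, h.det ≠ 0 ∧ cj h = h * g := by
  obtain ⟨e, he⟩ := hε
  let W : Set (ι → K) := {v | g *ᵥ star v = v}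
  have hs : ∀ v : ι → K, star (g *ᵥ v) = cj g *ᵥ star v := by
    intro v; ext i; simp [mulVec, dotProduct, cj, mul_comm, starRingEnd_apply]
  have hw : ∀ v : ι → K, ∀ c : K, c • v + star c • g *ᵥ star v ∈ W := by
    intro v c
    change g *ᵥ star _ = _
    rw [star_add, star_smul, star_smul, star_star, hs, star_star, mulVec_add, mulVec_smul,
      mulVec_smul, mulVec_mulVec, hg, one_mulVec, add_comm]
  have hspan : ⊤ ≤ Submodule.span K W := by
    intro v _
    have h1 := Submodule.subset_span (R := K) (hw v 1)
    have h2 := Submodule.subset_span (R := K) (hw v e)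
    have h3 := Submodule.smul_mem _ (e - star e)⁻¹
      (Submodule.sub_mem _ h2 (Submodule.smul_mem _ (star e) h1))
    convert h3 using 1
    have : e - star e ≠ 0 := sub_ne_zero.2 he.symm
    rw [eq_inv_smul_iff₀ this]
    simp only [star_one, one_smul, smul_add, sub_smul]
    abel
  let b := Module.Basis.ofSpan hspan
  have : Finite _ := Module.Finite.finite_basis b
  let := Fintype.ofFinite ((linearIndepOn_empty K (id : (ι → K) → (ι → K))).extend (Set.empty_subset W))
  have hc := Module.finrank_eq_card_basis b
  rw [Module.finrank_fintype_fun_eq_card] at hc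
  let b' := b.reindex (Fintype.equivOfCardEq hc.symm)
  have hb' : ∀ i, b' i ∈ W := by
    intro i
    apply Module.Basis.ofSpan_subset hspan
    simp [b', b]
  let k : Matrix ι ι K := (of fun i => b' i)ᵀ
  have hk : g * cj k = k := by
    ext i j
    have := congrFun (hb' j) i
    exact this
  have hku : IsUnit k := by
    rw [← linearIndependent_cols_iff_isUnit]
    exact b'.linearIndependent
  have hkd : k.det ≠ 0 := ((isUnit_iff_isUnit_det k).1 hku).ne_zero
  have hkd' : (cj k).det ≠ 0 := by rw [cj_det]; simpa using hkd
  refine ⟨k⁻¹, by rw [det_nonsing_inv]; simpa using hkd, ?_⟩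
  rw [cj_inv _ hkd]
  have : g = k * (cj k)⁻¹ := by
    rw [← hk, Matrix.mul_assoc, hk, mul_nonsing_inv _ hkd'.isUnit, Matrix.mul_one]
  rw [this, ← Matrix.mul_assoc, nonsing_inv_mul _ hkd.isUnit, Matrix.one_mul]

lemma det_ne_of_mul_herm {h M : Matrix ι ι K} (hh : h * hᴴ = M) (hM : M.det ≠ 0) : h.det ≠ 0 := by
  rw [← hh, det_mul] at hM
  exact left_ne_zero_of_mul hM

lemma countU (hgood : Good K ι) (P : Matrix ι ι K → Prop) :
    Nat.card {h : Matrix ι ι K // h.det ≠ 0 ∧ P (h * hᴴ)} =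
      Nat.card {M : Matrix ι ι K // (M.IsHermitian ∧ M.det ≠ 0) ∧ P M} *
        Nat.card (Matrix.unitaryGroup ι K) := by
  rw [← Nat.card_prod]
  symm
  choose c hc using hgood
  let f : {M : Matrix ι ι K // (M.IsHermitian ∧ M.det ≠ 0) ∧ P M} × (Matrix.unitaryGroup ι K) →
    Matrix ι ι K := fun t => c t.1.1 t.1.2.1.1 t.1.2.1.2 * t.2.1
  have hf : ∀ t, f t * (f t)ᴴ = t.1.1 := by
    intro t
    have hu : t.2.1 * t.2.1ᴴ = 1 := mem_unitaryGroup_iff.1 t.2.2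
    simp only [f]
    rw [conjTranspose_mul, Matrix.mul_assoc, ← Matrix.mul_assoc t.2.1, hu, Matrix.one_mul, hc]
  apply Nat.card_congr
  refine Equiv.ofBijective (fun t => ⟨f t, det_ne_of_mul_herm (hf t) t.1.2.1.2, by
    rw [hf]; exact t.1.2.2⟩) ⟨?_, ?_⟩
  · rintro ⟨⟨M, hM⟩, u⟩ ⟨⟨N, hN⟩, w⟩ h
    have h := congrArg Subtype.val h
    have h1 : M = N := by
      have e1 := hf ⟨⟨M, hM⟩, u⟩
      have e2 := hf ⟨⟨N, hN⟩, w⟩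
      simp only at h e1 e2
      rw [← e1, ← e2, h]
    subst h1
    have hcu : IsUnit (c M hM.1.1 hM.1.2) := (isUnit_iff_isUnit_det _).2
      (det_ne_of_mul_herm (hc M hM.1.1 hM.1.2) hM.1.2).isUnit
    have h3 : u = w := Subtype.ext (hcu.mul_left_cancel h)
    rw [h3]
  · rintro ⟨h, hd, hP⟩
    have hM1 : (h * hᴴ).IsHermitian := isHermitian_mul_conjTranspose_self h
    have hM2 : (h * hᴴ).det ≠ 0 := by
      rw [det_mul, det_conjTranspose]; simpa using hd
    have hcd := (det_ne_of_mul_herm (hc _ hM1 hM2) hM2).isUnit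
    have hch := hc _ hM1 hM2
    set C := c _ hM1 hM2
    have hcd' : IsUnit (Cᴴ).det := by rw [det_conjTranspose]; exact hcd.star
    refine ⟨⟨⟨h * hᴴ, ⟨hM1, hM2⟩, hP⟩, ⟨C⁻¹ * h, ?_⟩⟩, ?_⟩
    · rw [mem_unitaryGroup_iff, star_eq_conjTranspose, conjTranspose_mul, conjTranspose_nonsing_inv]
      calc C⁻¹ * h * (hᴴ * (Cᴴ)⁻¹) = C⁻¹ * (h * hᴴ) * (Cᴴ)⁻¹ := by simp only [Matrix.mul_assoc]
        _ = (C⁻¹ * C) * (Cᴴ * (Cᴴ)⁻¹) := by rw [← hch]; simp only [Matrix.mul_assoc]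
        _ = 1 := by rw [nonsing_inv_mul _ hcd, mul_nonsing_inv _ hcd']; simp
    · apply Subtype.ext
      change C * (C⁻¹ * h) = h
      rw [← Matrix.mul_assoc, mul_nonsing_inv _ hcd, Matrix.one_mul]

lemma sym_of (h g : Matrix ι ι K) (hg : gᵀ = g) (hh : cj h = h * g) : (h * hᴴ)ᵀ = h * hᴴ := by
  have h1 : hᴴ = g * hᵀ := by
    rw [← cj_transpose, hh, transpose_mul, hg]
  have h2 : hᴴᵀ = cj h := by rw [← cj_transpose, transpose_transpose]
  rw [transpose_mul, h2, hh, h1, Matrix.mul_assoc]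

lemma countA (hε : ∃ e : K, star e ≠ e) :
    Nat.card {h : Matrix ι ι K // h.det ≠ 0 ∧ (h * hᴴ)ᵀ = h * hᴴ} =
      Nat.card {g : Matrix ι ι K // g * cj g = 1 ∧ gᵀ = g} *
        Nat.card {p : Matrix ι ι K // p.det ≠ 0 ∧ cj p = p} := by
  rw [← Nat.card_prod]
  symm
  choose c hcd hc using (hilbert90 hε : ∀ g : Matrix ι ι K, g * cj g = 1 → _)
  apply Nat.card_congr
  have hf : ∀ (g p : Matrix ι ι K) (hg : g * cj g = 1), cj p = p →
      cj (p * c g hg) = p * c g hg * g := by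
    intro g p hg hp
    rw [cj_mul, hp, hc, Matrix.mul_assoc]
  refine Equiv.ofBijective (fun t => ⟨t.2.1 * c t.1.1 t.1.2.1, by
    rw [det_mul]; exact mul_ne_zero t.2.2.1 (hcd _ _), 
    sym_of _ t.1.1 t.1.2.2 (hf _ _ _ t.2.2.2)⟩) ⟨?_, ?_⟩
  · rintro ⟨⟨g, hg⟩, ⟨p, hp⟩⟩ ⟨⟨g', hg'⟩, ⟨p', hp'⟩⟩ h
    have h : p * c g hg.1 = p' * c g' hg'.1 := congrArg Subtype.val h
    have h1 := hf g p hg.1 hp.2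
    rw [h, hf g' p' hg'.1 hp'.2] at h1
    have hu : IsUnit (p' * c g' hg'.1) := (isUnit_iff_isUnit_det _).2 (by
      rw [det_mul]; exact (mul_ne_zero hp'.1 (hcd _ _)).isUnit)
    have h2 := hu.mul_left_cancel h1
    subst h2
    have hu : IsUnit (c g' hg'.1) := (isUnit_iff_isUnit_det _).2 (hcd _ _).isUnit
    have := hu.mul_right_cancel h
    subst this
    rfl
  · rintro ⟨h, hd, hs⟩
    have hd' : (cj h).det ≠ 0 := by rw [cj_det]; simpa using hd
    obtain ⟨g, hgdef⟩ : ∃ g, g = h⁻¹ * cj h := ⟨_, rfl⟩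
    have hhg : cj h = h * g := by
      rw [hgdef, ← Matrix.mul_assoc, mul_nonsing_inv _ hd.isUnit, Matrix.one_mul]
    have hu : IsUnit h := (isUnit_iff_isUnit_det _).2 hd.isUnit
    have hut : IsUnit hᵀ := (isUnit_iff_isUnit_det _).2 (by rw [det_transpose]; exact hd.isUnit)
    have hg1 : g * cj g = 1 := by
      apply hu.mul_left_cancel
      rw [← Matrix.mul_assoc, ← hhg, ← cj_mul, ← hhg, cj_cj, Matrix.mul_one]
    have hgs : gᵀ = g := by
      have h2 : hᴴᵀ = cj h := by rw [← cj_transpose, transpose_transpose]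
      rw [transpose_mul, h2, ← cj_transpose, hhg, transpose_mul, Matrix.mul_assoc] at hs
      exact (hut.mul_right_cancel (hu.mul_left_cancel hs)).symm
    have hk := hc g hg1
    have hkd := hcd g hg1
    refine ⟨⟨⟨g, hg1, hgs⟩, ⟨h * (c g hg1)⁻¹, ?_, ?_⟩⟩, ?_⟩
    · rw [det_mul, det_nonsing_inv]
      simp [hd, hkd]
    · have huk : IsUnit (c g hg1) := (isUnit_iff_isUnit_det _).2 hkd.isUnit
      have hug : IsUnit g := IsUnit.of_mul_eq_one _ hg1
      apply (huk.mul hug).mul_right_cancel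
      rw [← hk, ← cj_mul, Matrix.mul_assoc, nonsing_inv_mul _ hkd.isUnit, Matrix.mul_one, hk,
        ← Matrix.mul_assoc, Matrix.mul_assoc h, nonsing_inv_mul _ hkd.isUnit, Matrix.mul_one, hhg]
    · apply Subtype.ext
      change h * (c g hg1)⁻¹ * c g hg1 = h
      rw [Matrix.mul_assoc, nonsing_inv_mul _ hkd.isUnit, Matrix.mul_one]
end PartB

section PartC

lemma card_GL_eq {K : Type*} [Field K] (n : ℕ) :
    Nat.card {p : Matrix (Fin n) (Fin n) K // p.det ≠ 0} = Nat.card (GL (Fin n) K) := by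
  apply Nat.card_congr
  exact
  { toFun := fun p => GeneralLinearGroup.mkOfDetNeZero p.1 p.2
    invFun := fun g => ⟨g.1, ((isUnit_iff_isUnit_det _).1 g.isUnit).ne_zero⟩
    left_inv := fun p => rfl
    right_inv := fun g => by ext; rfl }

lemma gl_prod (Q n : ℕ) (hQ : 1 ≤ Q) :
    ((∏ i : Fin n, (Q ^ n - Q ^ (i : ℕ)) : ℕ) : ℤ) =
      ∏ i ∈ Finset.range n, ((Q : ℤ) ^ i * ((Q : ℤ) ^ (i + 1) - 1)) := by
  rw [Fin.prod_univ_eq_prod_range (fun i => Q ^ n - Q ^ i) n, Finset.prod_mul_distrib,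
    ← Finset.prod_range_reflect (fun i => (Q : ℤ) ^ (i + 1) - 1), ← Finset.prod_mul_distrib]
  push_cast
  apply Finset.prod_congr rfl
  intro i hi
  have hi := Finset.mem_range.1 hi
  rw [Nat.cast_sub (Nat.pow_le_pow_right hQ hi.le)]
  push_cast
  have : n - 1 - i + 1 = n - i := by omega
  rw [this, mul_sub, ← pow_add]
  congr 2
  · omega
  · simp

lemma hermCount {K : Type*} [Field K] [Fintype K] [StarRing K] (q : ℕ) (hq : 1 ≤ q)
    (hQ : Nat.card K = q ^ 2) (hf : Nat.card {x : K // star x = x} = q) (n : ℕ) :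
    (Nat.card (HI K (Fin n)) : ℤ) =
      ∏ i ∈ Finset.range n, ((q : ℤ) ^ i * ((q : ℤ) ^ (i + 1) + (-1) ^ (i + 1))) := by
  induction n using Nat.twoStepInduction with
  | zero => simp [hcard_zero]
  | one =>
    rw [hcard_one, hf]
    push_cast [Nat.cast_sub hq]
    simp; ring
  | more n ih1 ih2 =>
    rw [hcard_succ, hf, hQ]
    have h1 : 1 ≤ (q ^ 2) ^ (n + 1) := Nat.one_le_pow _ _ (Nat.one_le_pow _ _ hq)
    push_cast [Nat.cast_sub hq, Nat.cast_sub h1]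
    rw [ih1, ih2, Finset.prod_range_succ _ (n + 1), Finset.prod_range_succ _ n]
    generalize ∏ i ∈ Finset.range n, ((q : ℤ) ^ i * ((q : ℤ) ^ (i + 1) + (-1) ^ (i + 1))) = R
    rcases Nat.even_or_odd n with he | ho
    · simp only [pow_succ, he.neg_one_pow]
      ring
    · simp only [pow_succ, ho.neg_one_pow]
      ring

lemma symCount {K : Type*} [Field K] [Fintype K] [StarRing K] (q : ℕ) (hq : 1 ≤ q)
    (hQ : Nat.card K = q) (hf : Nat.card {x : K // star x = x} = q) (n : ℕ) :
    (Nat.card (HI K (Fin n)) : ℤ) =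
      ∏ i ∈ Finset.range n, (if Odd (i + 1) then (q : ℤ) ^ (i + 1) - 1 else (q : ℤ) ^ (i + 1)) := by
  induction n using Nat.twoStepInduction with
  | zero => simp [hcard_zero]
  | one =>
    rw [hcard_one, hf]
    push_cast [Nat.cast_sub hq]
    simp
  | more n ih1 ih2 =>
    rw [hcard_succ, hf, hQ]
    have h1 : 1 ≤ q ^ (n + 1) := Nat.one_le_pow _ _ hq
    push_cast [Nat.cast_sub hq, Nat.cast_sub h1]
    rw [ih1, ih2, Finset.prod_range_succ _ (n + 1), Finset.prod_range_succ _ n]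
    generalize ∏ i ∈ Finset.range n, (if Odd (i + 1) then (q : ℤ) ^ (i + 1) - 1 else (q : ℤ) ^ (i + 1)) = R
    rcases Nat.even_or_odd n with he | ho
    · have h1 : Odd (n + 1) := he.add_one
      have h2 : ¬ Odd (n + 1 + 1) := by rw [Nat.not_odd_iff_even]; exact h1.add_one
      rw [if_pos h1, if_neg h2]
      ring
    · have h1 : ¬ Odd (n + 1) := by rw [Nat.not_odd_iff_even]; exact ho.add_one
      have h2 : Odd (n + 1 + 1) := (Nat.not_odd_iff_even.1 h1).add_one
      rw [if_neg h1, if_pos h2]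
      ring

lemma final_arith (q n a : ℕ) (hq : 2 ≤ q)
    (h : (a : ℤ) * (∏ i ∈ Finset.range n, ((q : ℤ) ^ i * ((q : ℤ) ^ (i + 1) - 1))) *
      (∏ i ∈ Finset.range n, ((q : ℤ) ^ i * ((q : ℤ) ^ (i + 1) + (-1) ^ (i + 1)))) =
      (∏ i ∈ Finset.range n, (if Odd (i + 1) then (q : ℤ) ^ (i + 1) - 1 else (q : ℤ) ^ (i + 1))) *
      ∏ i ∈ Finset.range n, (((q ^ 2 : ℕ) : ℤ) ^ i * (((q ^ 2 : ℕ) : ℤ) ^ (i + 1) - 1))) :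
    a = ∏ i ∈ Finset.Icc 1 n, (if Odd i then q ^ i + 1 else q ^ i) := by
  have e : ∏ i ∈ Finset.Icc 1 n, (if Odd i then q ^ i + 1 else q ^ i) =
      ∏ i ∈ Finset.range n, (if Odd (i + 1) then q ^ (i + 1) + 1 else q ^ (i + 1)) := by
    rw [Finset.range_eq_Ico, Finset.prod_Ico_add' (fun i => if Odd i then q ^ i + 1 else q ^ i) 0 n 1]
    rfl
  rw [e]
  have hq' : (2 : ℤ) ≤ q := by exact_mod_cast hq
  have hp : ∀ i : ℕ, (2 : ℤ) ≤ (q : ℤ) ^ (i + 1) := by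
    intro i
    have := Nat.pow_le_pow_right (show 0 < q by omega) (show 1 ≤ i + 1 by omega)
    have : q ≤ q ^ (i + 1) := by simpa using this
    exact_mod_cast hq.trans this
  have hne : (∏ i ∈ Finset.range n, ((q : ℤ) ^ i * ((q : ℤ) ^ (i + 1) - 1))) *
      (∏ i ∈ Finset.range n, ((q : ℤ) ^ i * ((q : ℤ) ^ (i + 1) + (-1) ^ (i + 1)))) ≠ 0 := by
    refine mul_ne_zero (Finset.prod_ne_zero_iff.2 fun i _ => ?_)
      (Finset.prod_ne_zero_iff.2 fun i _ => ?_)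
    · have := hp i
      exact mul_ne_zero (pow_ne_zero _ (by omega)) (by omega)
    · have := hp i
      refine mul_ne_zero (pow_ne_zero _ (by omega)) ?_
      rcases neg_one_pow_eq_or ℤ (i + 1) with h | h <;> rw [h] <;> omega
  rw [mul_assoc] at h
  have : (a : ℤ) = ((∏ i ∈ Finset.range n, (if Odd (i + 1) then q ^ (i + 1) + 1 else q ^ (i + 1)) : ℕ) : ℤ) := by
    apply mul_right_cancel₀ hne
    rw [h]
    push_cast
    simp only [← Finset.prod_mul_distrib]
    apply Finset.prod_congr rfl
    intro i _
    split_ifs with ho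
    · rw [ho.neg_one_pow]; ring
    · rw [(Nat.not_odd_iff_even.1 ho).neg_one_pow]; ring
  exact_mod_cast this

section field
variable {F : Type} [Field F] [Fintype F] [StarRing F] {q : ℕ}

lemma fieldFacts (hq : 2 ≤ q) (hF : Fintype.card F = q ^ 2) (hstar : ∀ x : F, star x = x ^ q) :
    (∃ e : F, star e ≠ e) ∧ (∀ c : F, star c = c → ∃ y, y * star y = c) ∧
      Nat.card {x : F // star x = x} = q := by
  classical
  obtain ⟨z, hz⟩ := IsCyclic.exists_generator (α := Fˣ)
  have hfac : q ^ 2 - 1 = (q + 1) * (q - 1) := by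
    simpa using Nat.sq_sub_sq q 1
  have hoz : orderOf z = (q + 1) * (q - 1) := by
    rw [orderOf_eq_card_of_forall_mem_zpowers hz, Nat.card_eq_fintype_card, Fintype.card_units, hF, hfac]
  have hpow : ∀ x : F, x ^ q = x * x ^ (q - 1) := by
    intro x
    rw [← pow_succ']; congr 1; omega
  have hfix : ∀ x : F, x ≠ 0 → (star x = x ↔ x ^ (q - 1) = 1) := by
    intro x hx
    rw [hstar, hpow]
    exact mul_eq_left₀ hx
  refine ⟨⟨z, ?_⟩, ?_, ?_⟩
  · rw [Ne, hfix _ z.ne_zero]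
    intro h
    have h : z ^ (q - 1) = 1 := Units.ext (by simpa using h)
    have := Nat.le_of_dvd (by omega) (orderOf_dvd_of_pow_eq_one h)
    rw [hoz] at this
    have : 0 < q - 1 := by omega
    nlinarith
  · intro c hc
    by_cases hc0 : c = 0
    · exact ⟨0, by simp [hc0]⟩
    rw [hfix c hc0] at hc
    obtain ⟨k, hk⟩ := (mem_powers_iff_mem_zpowers.2 (hz (Units.mk0 c hc0)))
    have hk : z ^ k = Units.mk0 c hc0 := hk
    have h1 : z ^ (k * (q - 1)) = 1 := by
      rw [pow_mul, hk]; ext; simpa using hc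
    have h2 := orderOf_dvd_of_pow_eq_one h1
    rw [hoz] at h2
    have h3 := Nat.dvd_of_mul_dvd_mul_right (by omega) h2
    obtain ⟨m, hm⟩ := h3
    refine ⟨(z ^ m : Fˣ), ?_⟩
    rw [hstar, ← pow_succ']
    have : c = ((z ^ k : Fˣ) : F) := by rw [hk]; rfl
    rw [this, hm, mul_comm, pow_mul]
    simp
  · have hprim : IsPrimitiveRoot ((z ^ (q + 1) : Fˣ) : F) (q - 1) := by
      have h1 : IsPrimitiveRoot z ((q + 1) * (q - 1)) := hoz ▸ IsPrimitiveRoot.orderOf z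
      have h2 := h1.pow (by have : 0 < q - 1 := by omega
                            positivity) rfl
      exact IsPrimitiveRoot.coe_units_iff.2 h2
    have hcard := hprim.card_nthRootsFinset
    have hs : (Finset.univ.filter fun x : F => star x = x) =
        insert 0 (Polynomial.nthRootsFinset (q - 1) (1 : F)) := by
      ext x
      rw [Finset.mem_insert, Polynomial.mem_nthRootsFinset (by omega)]
      by_cases hx : x = 0
      · simp [hx]
      · simp [hx, hfix x hx]
    rw [Nat.card_eq_fintype_card, Fintype.card_subtype, hs, Finset.card_insert_of_notMem, hcard]
    · omega
    · rw [Polynomial.mem_nthRootsFinset (by omega), zero_pow (by omega)]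
      simp

/-- fixed field -/
abbrev K0 (F : Type) [Field F] [StarRing F] : Subfield F :=
  (starRingEnd F).eqLocusField (RingHom.id F)

/-- matrices over the fixed field -/
def liftEquiv (n : ℕ) : Matrix (Fin n) (Fin n) (K0 F) ≃ {p : Matrix (Fin n) (Fin n) F // cj p = p} where
  toFun M := ⟨M.map (K0 F).subtype, by ext i j; exact (M i j).2⟩
  invFun p := of fun i j => ⟨p.1 i j, congrFun (congrFun p.2 i) j⟩
  left_inv M := rfl
  right_inv p := rfl

lemma lift_det (n : ℕ) (M : Matrix (Fin n) (Fin n) (K0 F)) :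
    ((liftEquiv n M).1).det ≠ 0 ↔ M.det ≠ 0 := by
  have : ((liftEquiv n M).1).det = (K0 F).subtype M.det := ((K0 F).subtype.map_det M).symm
  rw [this]
  simp

lemma card_fixGL (n : ℕ) : Nat.card {p : Matrix (Fin n) (Fin n) F // p.det ≠ 0 ∧ cj p = p} =
    Nat.card (GL (Fin n) (K0 F)) := by
  rw [← card_GL_eq]
  symm
  apply Nat.card_congr
  refine ((liftEquiv n).subtypeEquiv (q := fun p => p.1.det ≠ 0) fun M => (lift_det n M).symm).trans ?_
  exact
  { toFun := fun p => ⟨p.1.1, p.2, p.1.2⟩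
    invFun := fun p => ⟨⟨p.1, p.2.2⟩, p.2.1⟩
    left_inv := fun _ => rfl
    right_inv := fun _ => rfl }

lemma card_fixSym (n : ℕ) :
    Nat.card {M : Matrix (Fin n) (Fin n) F // (M.IsHermitian ∧ M.det ≠ 0) ∧ Mᵀ = M} =
    Nat.card (@HI (K0 F) _ starRingOfComm (Fin n) _ _) := by
  symm
  apply Nat.card_congr
  refine ((liftEquiv n).subtypeEquiv (q := fun p => p.1ᵀ = p.1 ∧ p.1.det ≠ 0) fun M => ?_).trans ?_
  · refine and_congr ?_ (lift_det n M).symm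
    change Mᵀ = M ↔ _
    constructor
    · intro h
      conv_rhs => rw [← h]
      rfl
    · intro h
      ext i j
      exact congrFun (congrFun h i) j
  · have key : ∀ M : Matrix (Fin n) (Fin n) F, Mᵀ = M → (cj M = M ↔ M.IsHermitian) := by
      intro M hM
      have : Mᴴ = cj M := by
        conv_rhs => rw [← hM]
        rfl
      rw [Matrix.IsHermitian, this]
    exact
    { toFun := fun p => ⟨p.1.1, ⟨(key _ p.2.1).1 p.1.2, p.2.2⟩, p.2.1⟩
      invFun := fun p => ⟨⟨p.1, (key _ p.2.2).2 p.2.1.1⟩, p.2.2, p.2.1.2⟩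
      left_inv := fun _ => rfl
      right_inv := fun _ => rfl }

lemma card_symU (n : ℕ) :
    Nat.card {g : Matrix.unitaryGroup (Fin n) F //
        (g : Matrix (Fin n) (Fin n) F).transpose = (g : Matrix (Fin n) (Fin n) F)} =
    Nat.card {g : Matrix (Fin n) (Fin n) F // g * cj g = 1 ∧ gᵀ = g} := by
  have key : ∀ g : Matrix (Fin n) (Fin n) F, gᵀ = g →
      (g ∈ Matrix.unitaryGroup (Fin n) F ↔ g * cj g = 1) := by
    intro g hg
    have : gᴴ = cj g := by
      conv_rhs => rw [← hg]
      rfl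
    rw [mem_unitaryGroup_iff, star_eq_conjTranspose, this]
  apply Nat.card_congr
  exact
  { toFun := fun g => ⟨g.1.1, (key _ g.2).1 g.1.2, g.2⟩
    invFun := fun g => ⟨⟨g.1, (key _ g.2.2).2 g.2.1⟩, g.2.2⟩
    left_inv := fun _ => rfl
    right_inv := fun _ => rfl }

end field
end PartC


/-- The number of symmetric matrices in the finite unitary group `U(n, F_{q²})`
(realized as `Matrix.unitaryGroup` over the field with `q²` elements, with star operation
the Frobenius `x ↦ x^q`) equals `(q+1)·q²·(q³+1)·q⁴ ⋯`, i.e.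
`Π_{i=1}^{n} (q^i + 1 if i odd, q^i if i even)`. -/
theorem card_symmetric_unitary (q n : ℕ)
    (hq : ∃ p k, Nat.Prime p ∧ 0 < k ∧ q = p ^ k)
    (F : Type) [Field F] [Fintype F] [StarRing F]
    (hF : Fintype.card F = q ^ 2) (hstar : ∀ x : F, star x = x ^ q) :
    Nat.card {g : Matrix.unitaryGroup (Fin n) F //
        (g : Matrix (Fin n) (Fin n) F).transpose = (g : Matrix (Fin n) (Fin n) F)}
      = ∏ i ∈ Finset.Icc 1 n, (if Odd i then q ^ i + 1 else q ^ i) := by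
  classical
  have hq2 : 2 ≤ q := by
    obtain ⟨p, k, hp, hk, rfl⟩ := hq
    exact hp.two_le.trans (Nat.le_self_pow hk.ne' p)
  obtain ⟨hε, hn, hfix⟩ := fieldFacts hq2 hF hstar
  rw [card_symU]
  apply final_arith q n _ hq2
  have hgood := good_fin hε hn n
  have hK0 : Nat.card (K0 F) = q := hfix
  have hFc : Nat.card F = q ^ 2 := by rw [Nat.card_eq_fintype_card, hF]
  have e1 := countU hgood (fun _ => True)
  have e2 := countU hgood (fun M => Mᵀ = M)
  have e3 := countA (ι := Fin n) hε
  rw [e2, card_fixGL, card_fixSym] at e3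
  simp only [and_true] at e1
  rw [card_GL_eq] at e1
  let : Fintype (K0 F) := Fintype.ofFinite _
  have c1 : Nat.card (GL (Fin n) F) = _ := Matrix.card_GL_field n
  have c2 : Nat.card (GL (Fin n) (K0 F)) = _ := Matrix.card_GL_field n
  rw [← Nat.card_eq_fintype_card, hFc] at c1
  rw [← Nat.card_eq_fintype_card, hK0] at c2
  have d1 := hermCount q (by omega) hFc hfix n
  have d2 := @symCount (K0 F) _ _ starRingOfComm q (by omega) hK0 (by
    rw [← hK0]
    exact Nat.card_congr (Equiv.subtypeUnivEquiv fun _ => rfl)) n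
  rw [← gl_prod q n (by omega), ← gl_prod (q ^ 2) n (Nat.one_le_pow _ _ (by omega)), ← c1, ← c2,
    ← d1, ← d2]
  norm_cast
  rw [← e3, e1]
  ring
end

section
/- Let G be a finite group, ι an automorphism of G with ι² = id, and χ an irreducible complex character of G. Define the twisted Frobenius–Schur indicator ε_ι(χ) = (1/|G|) Σ_{g∈G} χ(g·ι(g)). Then Σ_{χ ∈ Irr(G)} ε_ι(χ)·χ(1) = |{g ∈ G : ι(g)^{−1} = g}|. -/
open CategoryTheory in
theorem tfs_simple_of_irreducible {G : Type} [Group G] [Fintype G] {V : Type} [AddCommGroup V]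
    [Module ℂ V] [FiniteDimensional ℂ V] (ρ : Representation ℂ G V) [ρ.IsIrreducible] :
    Simple (FDRep.of ρ) := by
  have hne : (Nat.card G : ℂ) ≠ 0 := by simp [Nat.card_eq_fintype_card]
  have := invertibleOfNonzero hne
  rw [FDRep.simple_iff_char_is_norm_one]
  have h := Representation.char_orthonormal ρ ρ
  rw [if_pos ⟨Representation.Equiv.refl ρ⟩, inv_mul_eq_one₀ hne] at h
  exact h.symm

/-- The set of irreducible characters. -/
def tfsIrr (G : Type) [Group G] [Fintype G] : Set (G → ℂ) :=
  {f : G → ℂ | ∃ V : FDRep ℂ G, CategoryTheory.Simple V ∧ f = V.character}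

theorem tfs_trace_add {V : Type} [AddCommGroup V] [Module ℂ V] [FiniteDimensional ℂ V]
    (p q : Submodule ℂ V) (h : IsCompl p q) (f : V →ₗ[ℂ] V) (hp : ∀ x ∈ p, f x ∈ p)
    (hq : ∀ x ∈ q, f x ∈ q) :
    LinearMap.trace ℂ V f =
      LinearMap.trace ℂ p (f.restrict hp) + LinearMap.trace ℂ q (f.restrict hq) := by
  rw [← LinearMap.trace_prodMap',
    ← LinearMap.trace_conj' _ (Submodule.prodEquivOfIsCompl p q h)]
  congr 1
  ext x
  obtain ⟨y, rfl⟩ := (Submodule.prodEquivOfIsCompl p q h).surjective x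
  simp [LinearEquiv.conj_apply, Submodule.coe_prodEquivOfIsCompl']

theorem tfs_char_mem_span {G : Type} [Group G] [Fintype G] (n : ℕ) :
    ∀ (V : Type) [AddCommGroup V]
    [Module ℂ V] [FiniteDimensional ℂ V] (ρ : Representation ℂ G V),
    Module.finrank ℂ V = n → ρ.character ∈ Submodule.span ℂ (tfsIrr G) := by
  induction n using Nat.strong_induction_on with
  | _ n ih =>
  intro V _ _ _ ρ hn
  have hne : (Nat.card G : ℂ) ≠ 0 := by simp [Nat.card_eq_fintype_card]
  have : NeZero (Nat.card G : ℂ) := ⟨hne⟩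
  by_cases hirr : ρ.IsIrreducible
  · exact Submodule.subset_span ⟨FDRep.of ρ, tfs_simple_of_irreducible ρ, rfl⟩
  by_cases hsub : Subsingleton V
  · have : ρ.character = 0 := by
      ext g
      have : ρ g = 0 := Subsingleton.elim _ _
      simp [Representation.character, this]
    rw [this]; exact zero_mem _
  rw [not_subsingleton_iff_nontrivial] at hsub
  have hbt : ∀ σ : Subrepresentation ρ, σ.toSubmodule = ⊤ → σ = ⊤ := fun σ h =>
    Subrepresentation.toSubmodule_injective h
  have hbb : ∀ σ : Subrepresentation ρ, σ.toSubmodule = ⊥ → σ = ⊥ := fun σ h =>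
    Subrepresentation.toSubmodule_injective h
  have hnt : Nontrivial (Subrepresentation ρ) := ⟨⊥, ⊤, fun h => by
    have h2 : (⊥ : Submodule ℂ V) = ⊤ := congrArg Subrepresentation.toSubmodule h
    exact bot_ne_top h2⟩
  have : ∃ σ : Subrepresentation ρ, σ ≠ ⊥ ∧ σ ≠ ⊤ := by
    by_contra! hcon
    exact hirr ⟨fun a => or_iff_not_imp_left.2 (hcon a)⟩
  obtain ⟨σ, hσb, hσt⟩ := this
  obtain ⟨τ, hc⟩ := exists_isCompl σ
  have hc' : IsCompl σ.toSubmodule τ.toSubmodule := by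
    refine IsCompl.of_eq ?_ ?_
    · rw [← Subrepresentation.toSubmodule_inf, hc.inf_eq_bot]; rfl
    · rw [← Subrepresentation.toSubmodule_sup, hc.sup_eq_top]; rfl
  have hτt : τ ≠ ⊤ := by
    rintro rfl
    exact hσb (by simpa using hc.inf_eq_bot)
  have h1 := ih _ (hn ▸ Submodule.finrank_lt (fun h => hσt (hbt _ h))) _ σ.toRepresentation rfl
  have h2 := ih _ (hn ▸ Submodule.finrank_lt (fun h => hτt (hbt _ h))) _ τ.toRepresentation rfl
  have : ρ.character = σ.toRepresentation.character + τ.toRepresentation.character := by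
    ext g
    exact tfs_trace_add _ _ hc' (ρ g) (σ.apply_mem_toSubmodule g) (τ.apply_mem_toSubmodule g)
  rw [this]
  exact add_mem h1 h2

theorem tfs_regular_char (G : Type) [Group G] [Fintype G] [DecidableEq G] (g : G) :
    (Representation.leftRegular ℂ G).character g = if g = 1 then (Fintype.card G : ℂ) else 0 := by
  rw [Representation.character, LinearMap.trace_eq_matrix_trace ℂ
    (MonoidAlgebra.basis G ℂ), Matrix.trace]
  simp only [Matrix.diag, LinearMap.toMatrix_apply]
  simp [MonoidAlgebra.basis, Finsupp.single_apply]

/-- The character pairing. -/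
noncomputable def tfsPair {G : Type} [Group G] [Fintype G] (χ : G → ℂ) : (G → ℂ) →ₗ[ℂ] ℂ where
  toFun f := (Nat.card G : ℂ)⁻¹ * ∑ g : G, f g * χ g⁻¹
  map_add' := by intro a b; simp [add_mul, Finset.sum_add_distrib, mul_add]
  map_smul' := by
    intro a b
    simp only [Pi.smul_apply, smul_eq_mul, RingHom.id_apply, Finset.mul_sum]
    exact Finset.sum_congr rfl fun _ _ => by ring

open scoped Classical in
theorem tfs_pair {G : Type} [Group G] [Fintype G] {a b : G → ℂ} (ha : a ∈ tfsIrr G)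
    (hb : b ∈ tfsIrr G) : tfsPair b a = if a = b then 1 else 0 := by
  obtain ⟨V, hV, rfl⟩ := ha
  obtain ⟨W, hW, rfl⟩ := hb
  have hne : (Nat.card G : ℂ) ≠ 0 := by simp [Nat.card_eq_fintype_card]
  have := invertibleOfNonzero hne
  have h1 := FDRep.char_orthonormal V W
  change (Nat.card G : ℂ)⁻¹ * _ = _
  by_cases h : V.character = W.character
  · rw [if_pos h, h, FDRep.char_orthonormal W W, if_pos ⟨CategoryTheory.Iso.refl W⟩]
  · rw [if_neg h, h1, if_neg]
    rintro ⟨i⟩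
    exact h (FDRep.char_iso i)

theorem tfs_linInd (G : Type) [Group G] [Fintype G] :
    LinearIndependent ℂ (fun x : tfsIrr G => (x : G → ℂ)) := by
  classical
  rw [linearIndependent_iff']
  intro s c hs i hi
  have h := congrArg (tfsPair (i : G → ℂ)) hs
  simp only [map_sum, map_smul, map_zero, tfs_pair (Subtype.coe_prop _) i.2, smul_eq_mul,
    mul_ite, mul_one, mul_zero] at h
  simpa [Subtype.coe_inj, hi] using h

theorem tfs_finite (G : Type) [Group G] [Fintype G] : (tfsIrr G).Finite :=
  (tfs_linInd G).setFinite

theorem tfs_expand {G : Type} [Group G] [Fintype G] {f : G → ℂ}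
    (hf : f ∈ Submodule.span ℂ (tfsIrr G)) :
    ∑ χ ∈ (tfs_finite G).toFinset, tfsPair χ f • χ = f := by
  classical
  induction hf using Submodule.span_induction with
  | mem x hx =>
    rw [Finset.sum_eq_single x]
    · rw [tfs_pair hx hx]; simp
    · intro b hb hne
      rw [tfs_pair hx (by simpa using hb), if_neg hne.symm, zero_smul]
    · intro h; exact absurd hx (by simpa using h)
  | zero => simp
  | add x y _ _ h1 h2 => simp only [map_add, add_smul, Finset.sum_add_distrib, h1, h2]
  | smul a x _ h => simp only [map_smul, smul_assoc, ← Finset.smul_sum, h]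

theorem tfs_second_orth {G : Type} [Group G] [Fintype G] [DecidableEq G] (g : G) :
    ∑ χ ∈ (tfs_finite G).toFinset, χ 1 * χ g = if g = 1 then (Fintype.card G : ℂ) else 0 := by
  have h := congrFun (tfs_expand (tfs_char_mem_span _ _ (Representation.leftRegular ℂ G) rfl)) g
  rw [tfs_regular_char] at h
  rw [← h, Finset.sum_apply]
  refine Finset.sum_congr rfl fun χ _ => ?_
  have : tfsPair χ (Representation.leftRegular ℂ G).character = χ 1 := by
    change (Nat.card G : ℂ)⁻¹ * _ = _
    simp [tfs_regular_char]
  rw [this]; rfl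

/-- Twisted Frobenius–Schur involution formula: for a finite group `G`, an order-2
automorphism `ι` of `G`, and with `ε_ι(χ) = (1/|G|)Σ_g χ(g·ι(g))` the twisted
Frobenius–Schur indicator, `Σ_{χ ∈ Irr(G)} ε_ι(χ)·χ(1) = #{g ∈ G : ι(g)⁻¹ = g}`. -/
theorem twisted_frobenius_schur_sum (G : Type) [Group G] [Fintype G]
    (ι : G ≃* G) (hι : ∀ g, ι (ι g) = g) :
    ∑ᶠ χ ∈ {f : G → ℂ | ∃ V : FDRep ℂ G, CategoryTheory.Simple V ∧ f = V.character},
        ((1 / (Fintype.card G : ℂ)) * ∑ g : G, χ (g * ι g)) * χ 1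
      = (Nat.card {g : G // (ι g)⁻¹ = g} : ℂ) := by
  classical
  change ∑ᶠ χ ∈ tfsIrr G, _ = _
  rw [finsum_mem_eq_finite_toFinset_sum _ (tfs_finite G)]
  have h1 : ∀ χ : G → ℂ, ((1 / (Fintype.card G : ℂ)) * ∑ g : G, χ (g * ι g)) * χ 1 =
      (1 / (Fintype.card G : ℂ)) * ∑ g : G, χ 1 * χ (g * ι g) := by
    intro χ
    rw [← Finset.mul_sum]; ring
  simp only [h1]
  rw [← Finset.mul_sum, Finset.sum_comm]
  simp only [tfs_second_orth]
  have hiff : ∀ g : G, g * ι g = 1 ↔ (ι g)⁻¹ = g := fun g => by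
    rw [mul_eq_one_iff_eq_inv, eq_comm]
  simp only [hiff]
  rw [← Finset.sum_filter, Finset.sum_const, Nat.card_eq_fintype_card, Fintype.card_subtype,
    nsmul_eq_mul]
  have : (Fintype.card G : ℂ) ≠ 0 := by simp
  field_simp
end

section
/- Let q be an odd prime power and n odd. The two orthogonal groups O(n, F_q) associated to the two equivalence classes of nondegenerate quadratic forms on F_q^n are isomorphic and each has order 2·q^{(n−1)²/4}·Π_{i=1}^{(n−1)/2} (q^{2i} − 1). -/
namespace OrthCard
open Finset
set_option linter.unusedSectionVars false

structure GaussData (F : Type) [Field F] [Fintype F] where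
  psi : AddChar F ℂ
  eta : MulChar F ℂ
  g : ℂ
  two : (2 : F) ≠ 0
  psi_sum : ∀ b : F, b ≠ 0 → ∑ x, psi (x * b) = 0
  eta_sq : ∀ a : F, a ≠ 0 → eta a ^ 2 = 1
  g_sq : g ^ 2 = eta (-1) * Fintype.card F
  quad_sum : ∀ a : F, a ≠ 0 → ∑ x, psi (a * x ^ 2) = eta a * g
  lin_sum : ∀ a : F, a ≠ 0 → ∑ x, eta x * psi (x * a) = eta a * g
  exists_neg : ∃ c : F, c ≠ 0 ∧ eta c = -1

theorem exists_gaussData (F : Type) [Field F] [Fintype F] (h2 : (2 : F) ≠ 0) :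
    Nonempty (GaussData F) := by
  classical
  have hF : ringChar F ≠ 2 := by
    intro h
    apply h2
    have := ringChar.Nat.cast_ringChar (R := F)
    rw [h] at this
    exact_mod_cast this
  obtain ⟨psi, hpsi⟩ := (AddChar.exists_apply_ne_zero (α := F) (a := 1)).2 one_ne_zero
  have hprim : psi.IsPrimitive := AddChar.IsPrimitive.of_ne_one (by
    rintro rfl; simp at hpsi)
  let eta : MulChar F ℂ := (quadraticChar F).ringHomComp (Int.castRingHom ℂ)
  have eta_def : ∀ x, eta x = ((quadraticChar F x : ℤ) : ℂ) := fun x => rfl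
  have hne : eta ≠ 1 := (MulChar.ringHomComp_ne_one_iff (RingHom.injective_int _)).2
    (quadraticChar_ne_one hF)
  have hquad : eta.IsQuadratic := (quadraticChar_isQuadratic F).comp _
  have esq : ∀ a : F, a ≠ 0 → eta a ^ 2 = 1 := by
    intro a ha
    rw [eta_def]
    exact_mod_cast quadraticChar_sq_one ha
  have lin : ∀ a : F, a ≠ 0 → ∑ x, eta x * psi (x * a) = eta a * gaussSum eta psi := by
    intro a ha
    have := gaussSum_mulShift eta psi (Units.mk0 a ha)
    rw [← this, ← mul_assoc, Units.val_mk0, ← sq, esq a ha, one_mul, gaussSum]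
    refine Finset.sum_congr rfl fun x _ => ?_
    rw [AddChar.mulShift_apply, mul_comm x a]
  refine ⟨psi, eta, gaussSum eta psi, h2, ?_, esq, gaussSum_sq hne hquad hprim, ?_, lin, ?_⟩
  · intro b hb
    rw [AddChar.sum_mulShift b hprim, if_neg hb]; simp
  · intro a ha
    rw [← lin a ha]
    have h0 : ∑ x, psi (x * a) = 0 := by
      rw [AddChar.sum_mulShift a hprim, if_neg ha]; simp
    rw [← Finset.sum_fiberwise (s := univ) (g := fun x : F => x ^ 2)]
    have : ∀ y : F, ∑ x with x ^ 2 = y, psi (a * x ^ 2) = (eta y + 1) * psi (y * a) := by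
      intro y
      have h1 : ∑ x with x ^ 2 = y, psi (a * x ^ 2) = ∑ x with x ^ 2 = y, psi (y * a) := by
        refine Finset.sum_congr rfl fun x hx => ?_
        rw [(Finset.mem_filter.1 hx).2, mul_comm]
      rw [h1, Finset.sum_const, nsmul_eq_mul]
      congr 1
      have := quadraticChar_card_sqrts hF y
      rw [eta_def]
      have h3 : (univ.filter fun x : F => x ^ 2 = y) = {x : F | x ^ 2 = y}.toFinset := by
        ext; simp
      rw [h3]
      exact_mod_cast this
    simp_rw [this, add_mul, one_mul, Finset.sum_add_distrib, h0, add_zero]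
  · obtain ⟨c, hc⟩ := quadraticChar_exists_neg_one' hF
    exact ⟨c, c.ne_zero, by rw [eta_def, hc]; simp⟩

variable {F : Type} [Field F] [Fintype F]

/-- orthogonal frames of prescribed norms -/
def Frames {V : Type} [AddCommGroup V] [Module F V] (Q : QuadraticForm F V) {n : ℕ}
    (a : Fin n → F) : Type :=
  {v : Fin n → V // (∀ i, Q (v i) = a i) ∧ ∀ i j, i ≠ j → QuadraticMap.polar Q (v i) (v j) = 0}

structure Good (D : GaussData F) {V : Type} [AddCommGroup V] [Module F V] [Fintype V]
    (Q : QuadraticForm F V) {n : ℕ} (a : Fin n → F) : Prop where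
  ne : ∀ i, a i ≠ 0
  card : Fintype.card V = Fintype.card F ^ n
  sum : ∀ t : F, t ≠ 0 → ∑ v, D.psi (t * Q v) = ∏ i, (D.eta (t * a i) * D.g)

section
variable {V : Type} [AddCommGroup V] [Module F V]

/-- orthogonal complement of a vector -/
abbrev perp (Q : QuadraticForm F V) (v : V) : Submodule F V := LinearMap.ker (Q.polarBilin v)

/-- restriction of the form -/
abbrev res (Q : QuadraticForm F V) (v : V) : QuadraticForm F (perp Q v) :=
  Q.comp (perp Q v).subtype

theorem polar_self' (Q : QuadraticForm F V) (v : V) : QuadraticMap.polar Q v v = 2 * Q v := by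
  rw [QuadraticMap.polar_self]; simp [two_mul]

theorem Q_add_smul (Q : QuadraticForm F V) (v w : V) (x : F) :
    Q (x • v + w) = x ^ 2 * Q v + Q w + x * QuadraticMap.polar Q v w := by
  rw [QuadraticMap.map_add Q, QuadraticMap.map_smul, QuadraticMap.polar_smul_left]
  simp [sq]

noncomputable def split (h2 : (2 : F) ≠ 0) (Q : QuadraticForm F V) (v : V) (hv : Q v ≠ 0) :
    F × perp Q v ≃ V where
  toFun p := p.1 • v + p.2.1
  invFun u := (QuadraticMap.polar Q v u / (2 * Q v),
    ⟨u - (QuadraticMap.polar Q v u / (2 * Q v)) • v, by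
      simp only [LinearMap.mem_ker, map_sub, map_smul, QuadraticMap.polarBilin_apply_apply,
        polar_self', smul_eq_mul]
      field_simp
      ring⟩)
  left_inv := by
    rintro ⟨x, w, hw⟩
    have hw' : QuadraticMap.polar Q v w = 0 := hw
    have : QuadraticMap.polar Q v (x • v + w) / (2 * Q v) = x := by
      rw [QuadraticMap.polar_add_right, QuadraticMap.polar_smul_right, polar_self', hw']
      simp only [smul_eq_mul]
      field_simp
      ring
    ext
    · exact this
    · simp only [this]; simp
  right_inv u := by simp

theorem Good.res {D : GaussData F} [Fintype V] {Q : QuadraticForm F V} {n : ℕ}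
    {a : Fin (n + 1) → F} (h : Good D Q a) {v : V} (hv : Q v = a 0) [Fintype (perp Q v)] :
    Good D (res Q v) (Fin.tail a) := by
  have hv0 : Q v ≠ 0 := by rw [hv]; exact h.ne 0
  have hq : 0 < Fintype.card F := Fintype.card_pos
  refine ⟨fun i => h.ne _, ?_, ?_⟩
  · have := Fintype.card_congr (split D.two Q v hv0)
    rw [Fintype.card_prod, h.card, pow_succ'] at this
    exact Nat.eq_of_mul_eq_mul_left hq this
  · intro t ht
    have h1 := h.sum t ht
    rw [Fin.prod_univ_succ, ← (split D.two Q v hv0).sum_comp, Fintype.sum_prod_type] at h1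
    have h2 : ∀ (x : F) (w : perp Q v), D.psi (t * Q (split D.two Q v hv0 (x, w)))
        = D.psi ((t * a 0) * x ^ 2) * D.psi (t * OrthCard.res Q v w) := by
      intro x w
      have hw : QuadraticMap.polar Q v w = 0 := w.2
      have : split D.two Q v hv0 (x, w) = x • v + w.1 := rfl
      rw [this, Q_add_smul, hw, ← AddChar.map_add_eq_mul, hv]
      congr 1
      simp only [QuadraticMap.comp_apply, Submodule.subtype_apply]
      ring
    simp_rw [h2, ← Finset.mul_sum] at h1
    rw [← Finset.sum_mul, D.quad_sum _ (mul_ne_zero ht (h.ne 0))] at h1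
    have hg : D.g ≠ 0 := by
      intro h0
      have := D.g_sq
      rw [h0] at this
      have h3 := D.eta_sq (-1) (by simp)
      have h4 : D.eta (-1) ≠ 0 := by intro h; rw [h] at h3; simp at h3
      have h5 : (Fintype.card F : ℂ) ≠ 0 := by exact_mod_cast hq.ne'
      have := mul_ne_zero h4 h5
      simp_all
    have he : D.eta (t * a 0) ≠ 0 := by
      intro h0
      have := D.eta_sq _ (mul_ne_zero ht (h.ne 0))
      rw [h0] at this; simp at this
    exact mul_left_cancel₀ (mul_ne_zero he hg) h1

noncomputable def framesSucc (Q : QuadraticForm F V) {n : ℕ} (a : Fin (n + 1) → F) :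
    Frames Q a ≃ Σ v : {v : V // Q v = a 0}, Frames (res Q v.1) (Fin.tail a) where
  toFun f := ⟨⟨f.1 0, f.2.1 0⟩, ⟨fun i => ⟨f.1 i.succ, f.2.2 _ _ (Fin.succ_ne_zero i).symm⟩,
    fun i => f.2.1 i.succ, fun i j hij => f.2.2 i.succ j.succ (by simpa using hij)⟩⟩
  invFun p := ⟨Fin.cons p.1.1 (fun i => (p.2.1 i).1), by
    constructor
    · intro i
      refine Fin.cases ?_ (fun i => ?_) i
      · exact p.1.2
      · exact p.2.2.1 i
    · intro i j
      refine Fin.cases ?_ (fun i => ?_) i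
      · refine Fin.cases ?_ (fun j => ?_) j
        · simp
        · intro _
          exact (p.2.1 j).2
      · refine Fin.cases ?_ (fun j => ?_) j
        · intro _
          rw [QuadraticMap.polar_comm]
          exact (p.2.1 i).2
        · intro hij
          exact p.2.2.2 i j (by rintro rfl; exact hij rfl)⟩
  left_inv f := by
    apply Subtype.ext
    funext i
    refine Fin.cases ?_ (fun i => ?_) i <;> rfl
  right_inv p := rfl

theorem count_eq (D : GaussData F) [Fintype V] (Q : QuadraticForm F V) (b : F) :
    (Fintype.card F : ℂ) * (Nat.card {v : V // Q v = b} : ℂ)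
      = ∑ t : F, D.psi (t * (-b)) * ∑ v : V, D.psi (t * Q v) := by
  classical
  simp_rw [Finset.mul_sum]
  rw [Finset.sum_comm]
  have : ∀ v : V, ∑ t : F, D.psi (t * (-b)) * D.psi (t * Q v)
      = if Q v = b then (Fintype.card F : ℂ) else 0 := by
    intro v
    simp_rw [← AddChar.map_add_eq_mul, ← mul_add]
    split_ifs with h
    · simp [h]
    · exact D.psi_sum _ (by intro h'; apply h; linear_combination h')
  simp_rw [this]
  rw [← Finset.sum_filter, Finset.sum_const, nsmul_eq_mul, mul_comm, Nat.card_eq_fintype_card,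
    Fintype.card_subtype]

open Classical in
theorem count_good (D : GaussData F) [Fintype V] (Q : QuadraticForm F V) {n : ℕ} {a : Fin n → F}
    (h : Good D Q a) (b : F) :
    (Fintype.card F : ℂ) * (Nat.card {v : V // Q v = b} : ℂ)
      = (Fintype.card F : ℂ) ^ n + 
        (∑ t ∈ univ.erase (0 : F), D.eta t ^ n * D.psi (t * (-b))) * ((∏ i, D.eta (a i)) * D.g ^ n) := by
  rw [count_eq D, ← Finset.add_sum_erase _ _ (Finset.mem_univ (0 : F))]
  congr 1
  · simp [h.card]
  · rw [Finset.sum_mul]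
    refine Finset.sum_congr rfl fun t ht => ?_
    rw [h.sum t (Finset.ne_of_mem_erase ht)]
    simp_rw [map_mul, Finset.prod_mul_distrib]
    simp
    ring

theorem count_odd (D : GaussData F) [Fintype V] (Q : QuadraticForm F V) {m : ℕ}
    {a : Fin (2 * m + 1) → F} (h : Good D Q a) (b : F) (hb : b ≠ 0) :
    (Nat.card {v : V // Q v = b} : ℂ)
      = (Fintype.card F : ℂ) ^ (2 * m) +
        D.eta (-1) ^ m * D.eta b * (∏ i, D.eta (a i)) * (Fintype.card F : ℂ) ^ m := by
  classical
  have h1 := count_good D Q h b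
  have hq : (Fintype.card F : ℂ) ≠ 0 := by exact_mod_cast Fintype.card_ne_zero
  have hs : ∑ t ∈ univ.erase (0 : F), D.eta t ^ (2 * m + 1) * D.psi (t * (-b))
      = D.eta (-1) * D.eta b * D.g := by
    rw [← map_mul, neg_one_mul, ← D.lin_sum _ (neg_ne_zero.2 hb),
      ← Finset.add_sum_erase _ _ (Finset.mem_univ (0 : F))]
    simp only [MulChar.map_zero, zero_mul, zero_add]
    refine Finset.sum_congr rfl fun t ht => ?_
    rw [pow_succ, pow_mul, D.eta_sq t (Finset.ne_of_mem_erase ht), one_pow, one_mul]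
  rw [hs] at h1
  apply mul_left_cancel₀ hq
  rw [h1]
  have h3 := D.eta_sq (-1) (by simp)
  have : D.g * D.g ^ (2 * m + 1) = (D.eta (-1) * Fintype.card F) ^ (m + 1) := by
    rw [← D.g_sq]; ring
  rw [mul_pow, pow_succ (D.eta (-1))] at this
  linear_combination (D.eta (-1) * D.eta b * ∏ i, D.eta (a i)) * this +
    D.eta (-1) ^ m * D.eta b * (∏ i, D.eta (a i)) * (Fintype.card F : ℂ) ^ (m + 1) * h3

theorem count_even (D : GaussData F) [Fintype V] (Q : QuadraticForm F V) {m : ℕ}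
    {a : Fin (2 * m + 1 + 1) → F} (h : Good D Q a) (b : F) (hb : b ≠ 0) :
    (Nat.card {v : V // Q v = b} : ℂ)
      = (Fintype.card F : ℂ) ^ (2 * m + 1) -
        D.eta (-1) ^ (m + 1) * (∏ i, D.eta (a i)) * (Fintype.card F : ℂ) ^ m := by
  classical
  have h1 := count_good D Q h b
  have hq : (Fintype.card F : ℂ) ≠ 0 := by exact_mod_cast Fintype.card_ne_zero
  have hs : ∑ t ∈ univ.erase (0 : F), D.eta t ^ (2 * m + 1 + 1) * D.psi (t * (-b)) = -1 := by
    have h2 := D.psi_sum _ (neg_ne_zero.2 hb)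
    rw [← Finset.add_sum_erase _ _ (Finset.mem_univ (0 : F))] at h2
    simp only [zero_mul, AddChar.map_zero_eq_one] at h2
    rw [← add_eq_zero_iff_eq_neg', ← h2]
    congr 1
    refine Finset.sum_congr rfl fun t ht => ?_
    rw [show 2 * m + 1 + 1 = 2 * (m + 1) by ring, pow_mul, D.eta_sq t (Finset.ne_of_mem_erase ht),
      one_pow, one_mul]
  rw [hs] at h1
  apply mul_left_cancel₀ hq
  rw [h1]
  have : D.g ^ (2 * m + 1 + 1) = (D.eta (-1) * Fintype.card F) ^ (m + 1) := by
    rw [← D.g_sq]; ring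
  rw [mul_pow] at this
  rw [this]
  ring

theorem frames_step (_D : GaussData F) [Fintype V] (Q : QuadraticForm F V) {n : ℕ}
    {a : Fin (n + 1) → F} (K : ℂ)
    (hK : ∀ v : V, Q v = a 0 → (Nat.card (Frames (res Q v) (Fin.tail a)) : ℂ) = K) :
    (Nat.card (Frames Q a) : ℂ) = Nat.card {v : V // Q v = a 0} * K := by
  classical
  have : ∀ v : {v : V // Q v = a 0}, Finite (Frames (res Q v.1) (Fin.tail a)) := by
    intro v
    unfold Frames
    infer_instance
  rw [Nat.card_congr (framesSucc Q a), Nat.card_sigma]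
  push_cast
  rw [Finset.sum_congr rfl (fun v _ => hK v.1 v.2), Finset.sum_const, nsmul_eq_mul,
    Nat.card_eq_fintype_card]
  rfl

theorem frames_zero (Q : QuadraticForm F V) (a : Fin 0 → F) : Nat.card (Frames Q a) = 1 := by
  rw [Nat.card_eq_one_iff_unique]
  refine ⟨⟨fun x y => Subtype.ext (funext fun i => i.elim0)⟩, ⟨⟨fun i => i.elim0, fun i => i.elim0,
    fun i => i.elim0⟩⟩⟩

end

theorem frames_card (D : GaussData F) (m : ℕ) : ∀ {V : Type} [AddCommGroup V] [Module F V]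
    [Fintype V] (Q : QuadraticForm F V) (a : Fin (2 * m + 1) → F) (_ : Good D Q a),
    (Nat.card (Frames Q a) : ℂ) = 2 * (Fintype.card F : ℂ) ^ (m ^ 2) *
      ∏ i ∈ Finset.Icc 1 m, ((Fintype.card F : ℂ) ^ (2 * i) - 1) := by
  classical
  induction m with
  | zero =>
    intro V _ _ _ Q a h
    rw [frames_step D Q (a := a) 1 (fun v _ => by rw [frames_zero]; simp),
      count_odd (m := 0) D Q h _ (h.ne 0)]
    have := D.eta_sq _ (h.ne 0)
    simp
    rw [← sq]
    have h3 : D.eta (a 0) ^ 2 = 1 := this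
    rw [h3]
    norm_num
  | succ m ih =>
    intro V _ _ _ Q a h
    set E' := ∏ i, D.eta (Fin.tail a i) with hE'
    have hE : ∏ i, D.eta (a i) = D.eta (a 0) * E' := by rw [Fin.prod_univ_succ]; rfl
    have hE2 : E' ^ 2 = 1 := by
      rw [hE', ← Finset.prod_pow]
      exact Finset.prod_eq_one fun i _ => D.eta_sq _ (h.ne _)
    have h3 : (D.eta (-1) ^ (m + 1)) ^ 2 = 1 := by
      rw [← pow_mul, mul_comm, pow_mul, D.eta_sq (-1) (by simp), one_pow]
    have hin : ∀ v : V, Q v = a 0 → (Nat.card (Frames (res Q v) (Fin.tail a)) : ℂ) =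
        ((Fintype.card F : ℂ) ^ (2 * m + 1) -
          D.eta (-1) ^ (m + 1) * E' * (Fintype.card F : ℂ) ^ m) *
        (2 * (Fintype.card F : ℂ) ^ (m ^ 2) *
          ∏ i ∈ Finset.Icc 1 m, ((Fintype.card F : ℂ) ^ (2 * i) - 1)) := by
      intro v hv
      have hg := h.res hv
      have hc := count_even D (res Q v) hg (Fin.tail a 0) (hg.ne 0)
      rw [hE']
      refine (frames_step D (res Q v) (a := Fin.tail a) _
        (fun w hw => ih (res (res Q v) w) _ (hg.res hw))).trans ?_
      exact congrArg (· * _) hc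
    rw [frames_step D Q (a := a) _ hin,
      count_odd D Q h _ (h.ne 0), hE, Finset.prod_Icc_succ_top (by omega)]
    have h4 := D.eta_sq _ (h.ne 0)
    set e := D.eta (-1) ^ (m + 1)
    set q := (Fintype.card F : ℂ)
    set P := ∏ i ∈ Finset.Icc 1 m, (q ^ (2 * i) - 1)
    have h5 : e * D.eta (a 0) * (D.eta (a 0) * E') = e * E' := by
      linear_combination e * E' * h4
    have h6 : (e * E') ^ 2 = 1 := by rw [mul_pow, h3, hE2, one_mul]
    rw [h5]
    generalize e * E' = z at *
    have : q ^ ((m + 1) ^ 2) = q ^ (m ^ 2) * q ^ (2 * m + 1) := by rw [← pow_add]; ring_nf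
    rw [this]
    linear_combination (-q ^ (2 * m + 1)) * (2 * q ^ m ^ 2 * P) * h6


theorem frame_sum {V : Type} [AddCommGroup V] [Module F V] (Q : QuadraticForm F V) {n : ℕ}
    {a : Fin n → F} (v : Frames Q a) (x : Fin n → F) (s : Finset (Fin n)) :
    Q (∑ i ∈ s, x i • v.1 i) = ∑ i ∈ s, a i * (x i * x i) := by
  classical
  induction s using Finset.induction_on with
  | empty => simp
  | insert i s hi ih =>
    rw [Finset.sum_insert hi, Finset.sum_insert hi, Q_add_smul, ih, v.2.1 i]
    have : QuadraticMap.polar Q (v.1 i) (∑ j ∈ s, x j • v.1 j) = 0 := by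
      rw [← QuadraticMap.polarBilin_apply_apply, map_sum]
      refine Finset.sum_eq_zero fun j hj => ?_
      rw [map_smul, QuadraticMap.polarBilin_apply_apply, v.2.2 i j (by rintro rfl; exact hi hj),
        smul_zero]
    rw [this]; ring

theorem frame_inj (h2 : (2 : F) ≠ 0) {V : Type} [AddCommGroup V] [Module F V]
    (Q : QuadraticForm F V) {n : ℕ}
    {a : Fin n → F} (ha : ∀ i, a i ≠ 0) (v : Frames Q a) :
    Function.Injective (Fintype.linearCombination F v.1) := by
  classical
  rw [injective_iff_map_eq_zero]
  intro x hx
  funext i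
  have h1 : QuadraticMap.polar Q (v.1 i) (∑ j, x j • v.1 j) = 0 := by
    rw [Fintype.linearCombination_apply] at hx
    rw [hx, QuadraticMap.polar_zero_right]
  rw [← QuadraticMap.polarBilin_apply_apply, map_sum, Finset.sum_eq_single i] at h1
  · rw [map_smul, QuadraticMap.polarBilin_apply_apply, polar_self', v.2.1 i] at h1
    simpa [h2, ha i] using h1
  · intro j _ hj
    rw [map_smul, QuadraticMap.polarBilin_apply_apply, v.2.2 i j hj.symm, smul_zero]
  · simp

theorem polar_isom {V W : Type} [AddCommGroup V] [Module F V] [AddCommGroup W] [Module F W]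
    {Q : QuadraticForm F V} {Q' : QuadraticForm F W} (f : Q.IsometryEquiv Q') (x y : V) :
    QuadraticMap.polar Q' (f x) (f y) = QuadraticMap.polar Q x y := by
  simp only [QuadraticMap.polar, ← map_add, QuadraticMap.IsometryEquiv.map_app]

noncomputable def isoFrames (h2 : (2 : F) ≠ 0) {n : ℕ} {a : Fin n → F} (ha : ∀ i, a i ≠ 0)
    (Q : QuadraticForm F (Fin n → F)) :
    (QuadraticMap.weightedSumSquares F a).IsometryEquiv Q ≃ Frames Q a where
  toFun f := ⟨fun i => f (Pi.single i 1), by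
    constructor
    · intro i
      rw [f.map_app, QuadraticMap.weightedSumSquares_apply]
      simp [Pi.single_apply]
    · intro i j hij
      rw [polar_isom, QuadraticMap.polar]
      simp only [QuadraticMap.weightedSumSquares_apply, ← Finset.sum_sub_distrib]
      refine Finset.sum_eq_zero fun k _ => ?_
      simp only [Pi.add_apply, Pi.single_apply]
      by_cases h1 : k = i
      · subst h1; simp [hij]
      · simp [h1]⟩
  invFun v := { LinearEquiv.ofInjectiveEndo (Fintype.linearCombination F v.1)
      (frame_inj h2 Q ha v) with
    map_app' := by
      intro m
      have := frame_sum Q v m univ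
      rw [QuadraticMap.weightedSumSquares_apply]
      simpa [Fintype.linearCombination_apply] using this }
  left_inv f := by
    apply DFunLike.ext
    intro x
    change Fintype.linearCombination F _ x = _
    rw [Fintype.linearCombination_apply]
    simp only [← map_smul, ← map_sum]
    congr 1
    funext j
    simp [Finset.sum_apply, Pi.single_apply]
  right_inv v := by
    apply Subtype.ext
    funext i
    change Fintype.linearCombination F _ (Pi.single i 1) = _
    simp

theorem psi_sum_prod {n : ℕ} (psi : AddChar F ℂ) (x : Fin n → F) :
    psi (∑ i, x i) = ∏ i, psi (x i) := by
  have := map_sum psi.toAddMonoidHom x univ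
  exact congrArg Additive.toMul this

theorem Good.of_iso (D : GaussData F) {n : ℕ} {a : Fin n → F} (ha : ∀ i, a i ≠ 0)
    {Q : QuadraticForm F (Fin n → F)}
    (e : Q.IsometryEquiv (QuadraticMap.weightedSumSquares F a)) : Good D Q a := by
  classical
  refine ⟨ha, by simp, fun t ht => ?_⟩
  have h1 : ∀ v, D.psi (t * Q v) = (fun x : Fin n → F => ∏ i, D.psi (t * a i * x i ^ 2)) (e v) := by
    intro v
    rw [← e.map_app, QuadraticMap.weightedSumSquares_apply, Finset.mul_sum, psi_sum_prod]
    refine Finset.prod_congr rfl fun i _ => ?_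
    rw [smul_eq_mul]; ring_nf
  simp_rw [h1]
  refine (e.toLinearEquiv.toEquiv.sum_comp
    (fun x : Fin n → F => ∏ i, D.psi (t * a i * x i ^ 2))).trans ?_
  simp_rw [← D.quad_sum _ (mul_ne_zero ht (ha _))]
  rw [Finset.prod_univ_sum, Fintype.piFinset_univ]

theorem Good.congr {D : GaussData F} {V : Type} [AddCommGroup V] [Module F V] [Fintype V]
    {Q : QuadraticForm F V} {n : ℕ} {a b : Fin n → F} (h : Good D Q a) (hb : ∀ i, b i ≠ 0)
    (hab : ∏ i, D.eta (a i) = ∏ i, D.eta (b i)) : Good D Q b := by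
  refine ⟨hb, h.card, fun t ht => ?_⟩
  rw [h.sum t ht]
  simp_rw [map_mul, Finset.prod_mul_distrib, hab]

theorem exists_diag (h2 : (2 : F) ≠ 0) {n : ℕ} (Q : QuadraticForm F (Fin n → F))
    (h : Q.polarBilin.Nondegenerate) : ∃ a : Fin n → F, (∀ i, a i ≠ 0) ∧
      Nonempty (Q.IsometryEquiv (QuadraticMap.weightedSumSquares F a)) := by
  have : Invertible (2 : F) := invertibleOfNonzero h2
  have hs : (QuadraticMap.associated (R := F) Q).SeparatingLeft := by
    intro x hx
    apply h.1 x
    intro y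
    have := hx y
    rw [QuadraticMap.associated_apply] at this
    simpa [QuadraticMap.polar, h2] using this
  have key : ∀ k, Module.finrank F (Fin n → F) = k → ∃ w : Fin k → Fˣ,
      QuadraticMap.Equivalent Q (QuadraticMap.weightedSumSquares F w) := by
    rintro _ rfl
    exact Q.equivalent_weightedSumSquares_units_of_nondegenerate' hs
  obtain ⟨w, ⟨e⟩⟩ := key n (by simp)
  refine ⟨fun i => w i, fun i => (w i).ne_zero, ?_⟩
  have : QuadraticMap.weightedSumSquares F w = QuadraticMap.weightedSumSquares F
      (fun i => (w i : F)) := by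
    ext x
    simp only [QuadraticMap.weightedSumSquares_apply, Units.smul_def]
  rw [← this]
  exact ⟨e⟩

theorem frames_card_nat (D : GaussData F) (m : ℕ) {V : Type} [AddCommGroup V] [Module F V]
    [Fintype V] (Q : QuadraticForm F V) (a : Fin (2 * m + 1) → F) (h : Good D Q a) :
    Nat.card (Frames Q a) = 2 * (Fintype.card F) ^ (m ^ 2) *
      ∏ i ∈ Finset.Icc 1 m, ((Fintype.card F) ^ (2 * i) - 1) := by
  have h1 := frames_card D m Q a h
  have : ((2 * (Fintype.card F) ^ (m ^ 2) *
      ∏ i ∈ Finset.Icc 1 m, ((Fintype.card F) ^ (2 * i) - 1) : ℕ) : ℂ) =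
      2 * (Fintype.card F : ℂ) ^ (m ^ 2) *
      ∏ i ∈ Finset.Icc 1 m, ((Fintype.card F : ℂ) ^ (2 * i) - 1) := by
    push_cast
    congr 1
    refine Finset.prod_congr rfl fun i _ => ?_
    rw [Nat.cast_pred (pow_pos Fintype.card_pos _)]
    push_cast; rfl
  rw [← this] at h1
  exact_mod_cast h1

theorem main (h2 : (2 : F) ≠ 0) (m : ℕ)
    (Q₁ Q₂ : QuadraticForm F (Fin (2 * m + 1) → F))
    (h₁ : Q₁.polarBilin.Nondegenerate) (h₂ : Q₂.polarBilin.Nondegenerate) :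
    (∃ e : Q₁.IsometryEquiv Q₁ ≃ Q₂.IsometryEquiv Q₂,
        ∀ f g : Q₁.IsometryEquiv Q₁, e (f.trans g) = (e f).trans (e g)) ∧
      Nat.card (Q₁.IsometryEquiv Q₁) = 2 * (Fintype.card F) ^ (m ^ 2) *
      ∏ i ∈ Finset.Icc 1 m, ((Fintype.card F) ^ (2 * i) - 1) := by
  classical
  obtain ⟨D⟩ := exists_gaussData F h2
  obtain ⟨a, ha, ⟨ea⟩⟩ := exists_diag h2 Q₁ h₁
  obtain ⟨b, hb, ⟨eb⟩⟩ := exists_diag h2 Q₂ h₂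
  have ga : Good D Q₁ a := Good.of_iso D ha ea
  have gb : Good D Q₂ b := Good.of_iso D hb eb
  constructor
  · have hE : ∀ c : Fin (2 * m + 1) → F, (∀ i, c i ≠ 0) →
        ∏ i, D.eta (c i) = 1 ∨ ∏ i, D.eta (c i) = -1 := by
      intro c hc
      rw [← sq_eq_one_iff, ← Finset.prod_pow]
      exact Finset.prod_eq_one fun i _ => D.eta_sq _ (hc _)
    obtain ⟨c, hc, hcE⟩ : ∃ c : F, c ≠ 0 ∧ ∏ i, D.eta (b i) = ∏ i, D.eta (c * a i) := by
      by_cases h : ∏ i, D.eta (b i) = ∏ i, D.eta (a i)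
      · exact ⟨1, one_ne_zero, by simpa using h⟩
      · obtain ⟨c, hc, hcn⟩ := D.exists_neg
        refine ⟨c, hc, ?_⟩
        simp_rw [map_mul, Finset.prod_mul_distrib, hcn]
        have : ((-1 : ℂ)) ^ (2 * m + 1) = -1 := by rw [pow_succ, pow_mul]; simp
        simp only [Finset.prod_const, Finset.card_univ, Fintype.card_fin, this]
        rcases hE a ha with h3 | h3 <;> rcases hE b hb with h4 | h4 <;> simp_all
    have hca : ∀ i, c * a i ≠ 0 := fun i => mul_ne_zero hc (ha i)
    have gc : Good D Q₂ (fun i => c * a i) := gb.congr hca hcE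
    have hcard := frames_card_nat D m Q₂ _ gc
    have hne : Nat.card (Frames Q₂ (fun i => c * a i)) ≠ 0 := by
      rw [hcard]
      have hq : 1 < Fintype.card F := Fintype.one_lt_card
      refine mul_ne_zero (mul_ne_zero two_ne_zero (pow_ne_zero _ (by omega)))
        (Finset.prod_ne_zero_iff.2 fun i hi => ?_)
      have := Nat.one_lt_pow (n := 2 * i) (by have := (Finset.mem_Icc.1 hi).1; omega) hq
      omega
    have hnon : Nonempty (Frames Q₂ (fun i => c * a i)) := by
      by_contra hcon
      rw [not_nonempty_iff] at hcon
      exact hne Nat.card_of_isEmpty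
    obtain ⟨fr⟩ := hnon
    let ec := (isoFrames h2 hca Q₂).symm fr
    let φ : (Fin (2 * m + 1) → F) ≃ₗ[F] (Fin (2 * m + 1) → F) :=
      ea.toLinearEquiv.trans ec.toLinearEquiv
    have hφ : ∀ x, Q₂ (φ x) = c * Q₁ x := by
      intro x
      have h3 : Q₂ (φ x) = Q₂ (ec (ea x)) := rfl
      rw [h3, ec.map_app, ← ea.map_app, QuadraticMap.weightedSumSquares_apply,
        QuadraticMap.weightedSumSquares_apply, Finset.mul_sum]
      simp [mul_assoc]
    have hφ' : ∀ y, c * Q₁ (φ.symm y) = Q₂ y := by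
      intro y
      rw [← hφ, LinearEquiv.apply_symm_apply]
    refine ⟨{ toFun := fun f => { (φ.symm.trans f.toLinearEquiv).trans φ with
                map_app' := ?_ }
              invFun := fun f => { (φ.trans f.toLinearEquiv).trans φ.symm with
                map_app' := ?_ }
              left_inv := ?_
              right_inv := ?_ }, ?_⟩
    · intro y
      change Q₂ (φ (f (φ.symm y))) = Q₂ y
      rw [hφ, f.map_app, hφ']
    · intro y
      change Q₁ (φ.symm (f (φ y))) = Q₁ y
      apply mul_left_cancel₀ hc
      rw [hφ', f.map_app, hφ]
    · intro f
      apply DFunLike.ext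
      intro x
      change φ.symm (φ (f (φ.symm (φ x)))) = f x
      simp
    · intro f
      apply DFunLike.ext
      intro x
      change φ (φ.symm (f (φ (φ.symm x)))) = f x
      simp
    · intro f g
      apply DFunLike.ext
      intro x
      change φ (g (f (φ.symm x))) = φ (g (φ.symm (φ (f (φ.symm x)))))
      simp
  · rw [← frames_card_nat D m Q₁ a ga]
    refine Nat.card_congr (Equiv.trans ?_ (isoFrames h2 ha Q₁))
    refine { toFun := fun f => ea.symm.trans f, invFun := fun f => ea.trans f,
             left_inv := ?_, right_inv := ?_ }
    · intro f
      apply DFunLike.ext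
      intro x
      change f (ea.toLinearEquiv.symm (ea.toLinearEquiv x)) = f x
      simp
    · intro f
      apply DFunLike.ext
      intro x
      change f (ea.toLinearEquiv (ea.toLinearEquiv.symm x)) = f x
      simp

end OrthCard



/-- Let `q` be an odd prime power and `n` odd.  For any two nondegenerate quadratic forms
`Q₁, Q₂` on `F_q^n`, the orthogonal groups (groups of self-isometries) are isomorphic —
witnessed by a composition-preserving bijection — and each has order
`2·q^{(n−1)²/4}·Π_{i=1}^{(n−1)/2} (q^{2i} − 1)`. -/
theorem orthogonal_group_card_odd (q n : ℕ)
    (hq : ∃ p k, Nat.Prime p ∧ Odd p ∧ 0 < k ∧ q = p ^ k) (hn : Odd n)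
    (F : Type) [Field F] [Fintype F] (hF : Fintype.card F = q)
    (Q₁ Q₂ : QuadraticForm F (Fin n → F))
    (h₁ : Q₁.polarBilin.Nondegenerate) (h₂ : Q₂.polarBilin.Nondegenerate) :
    (∃ e : Q₁.IsometryEquiv Q₁ ≃ Q₂.IsometryEquiv Q₂,
        ∀ f g : Q₁.IsometryEquiv Q₁, e (f.trans g) = (e f).trans (e g)) ∧
      Nat.card (Q₁.IsometryEquiv Q₁)
        = 2 * q ^ ((n - 1) ^ 2 / 4) * ∏ i ∈ Finset.Icc 1 ((n - 1) / 2), (q ^ (2 * i) - 1) := by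
  classical
  obtain ⟨p, k, hp, hpo, hk, hqp⟩ := hq
  obtain ⟨m, rfl⟩ := hn
  have h2 : (2 : F) ≠ 0 := by
    intro h
    have hodd : Odd (Fintype.card F) := by rw [hF, hqp]; exact hpo.pow
    have h3 : ((Fintype.card F : ℕ) : F) = 0 := FiniteField.cast_card_eq_zero F
    obtain ⟨j, hj⟩ := hodd
    rw [hj] at h3
    push_cast at h3
    rw [h] at h3
    simp at h3
  have e1 : (2 * m + 1 - 1) ^ 2 / 4 = m ^ 2 := by
    rw [Nat.add_sub_cancel, mul_pow]; omega
  have e2 : (2 * m + 1 - 1) / 2 = m := by omega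
  rw [e1, e2, ← hF]
  exact OrthCard.main h2 m Q₁ Q₂ h₁ h₂
end
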